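/- arXiv:1911.08385 — 16 statements merged into one kernel-verified Lean document; each statement's English description precedes it below -/
import Mathlib

section
/- Let γ^1,…,γ^d be a Clifford family of N×N complex matrices and for m ≥ 0 define I_m := 2^{−m} · Σ (γ^{a_1} γ^{a_2} ⋯ γ^{a_m}) ⊗ (γ^{a_1} γ^{a_2} ⋯ γ^{a_m}), the sum running over all injective tuples (a_1,…,a_m) of indices in {1,…,d} (so I_0 = 1⊗1 and I_1 = 2z). Then for every m ≥ 1 the recurrence I_{m+1} = z·I_m − (m/4)·(d − m + 1)·I_{m−1} holds. -/
open Kronecker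

/-- `cliffInv γ m` is the invariant
`I_m = 2^{-m} · Σ_{(a_1,…,a_m) injective} (γ^{a_1}⋯γ^{a_m}) ⊗ (γ^{a_1}⋯γ^{a_m})`,
the sum running over all injective tuples of indices. -/
noncomputable def cliffInv {d N : ℕ} (γ : Fin d → Matrix (Fin N) (Fin N) ℂ) (m : ℕ) :
    Matrix (Fin N × Fin N) (Fin N × Fin N) ℂ :=
  ((2 : ℂ) ^ m)⁻¹ •
    ∑ f ∈ Finset.univ.filter (fun f : Fin m → Fin d => Function.Injective f),
      ((List.ofFn fun i => γ (f i)).prod ⊗ₖ (List.ofFn fun i => γ (f i)).prod)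

/-- Sum over injective tuples of products in a commutative ring. -/
def injSum {A : Type*} [CommRing A] {d : ℕ} (w : Fin d → A) (m : ℕ) : A :=
  ∑ f : Fin m → Fin d, if Function.Injective f then ∏ i, w (f i) else 0

lemma injSum_succ {A : Type*} [CommRing A] {d : ℕ} (w : Fin d → A) (m : ℕ) :
    injSum w (m + 1) = ∑ f : Fin m → Fin d, if Function.Injective f then
      ∑ a, (if a ∈ Set.range f then 0 else w a * ∏ i, w (f i)) else 0 := by
  classical
  unfold injSum
  rw [← (Fin.consEquiv (fun _ : Fin (m + 1) => Fin d)).sum_comp, Fintype.sum_prod_type,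
    Finset.sum_comm]
  refine Finset.sum_congr rfl fun f _ => ?_
  have key : ∀ a, Function.Injective ((Fin.consEquiv (fun _ : Fin (m + 1) => Fin d)) (a, f)) ↔
      a ∉ Set.range f ∧ Function.Injective f := fun a => Fin.cons_injective_iff
  split_ifs with hf
  · refine Finset.sum_congr rfl fun a _ => ?_
    by_cases ha : a ∈ Set.range f
    · rw [if_pos ha, if_neg (fun h => ((key a).1 h).1 ha)]
    · rw [if_neg ha, if_pos ((key a).2 ⟨ha, hf⟩)]
      simp [Fin.prod_univ_succ, Fin.consEquiv_apply]
  · refine Finset.sum_eq_zero fun a _ => ?_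
    rw [if_neg (fun h => hf ((key a).1 h).2)]

lemma insertNth_inj_iff {d k : ℕ} (j : Fin (k + 1)) (a : Fin d) (g : Fin k → Fin d) :
    Function.Injective (j.insertNth a g : Fin (k + 1) → Fin d) ↔
      a ∉ Set.range g ∧ Function.Injective g := by
  constructor
  · intro h
    refine ⟨?_, ?_⟩
    · rintro ⟨i, hi⟩
      have : (j.insertNth a g : Fin (k + 1) → Fin d) (j.succAbove i)
          = (j.insertNth a g : Fin (k + 1) → Fin d) j := by simpa using hi
      exact Fin.succAbove_ne _ _ (h this)
    · intro x y hxy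
      have : (j.insertNth a g : Fin (k + 1) → Fin d) (j.succAbove x)
          = (j.insertNth a g : Fin (k + 1) → Fin d) (j.succAbove y) := by simpa using hxy
      exact Fin.succAbove_right_injective (h this)
  · rintro ⟨h1, h2⟩ x y hxy
    induction x using Fin.succAboveCases j with
    | x =>
      induction y using Fin.succAboveCases j with
      | x => rfl
      | p y => simp at hxy; exact absurd ⟨y, hxy.symm⟩ h1
    | p x =>
      induction y using Fin.succAboveCases j with
      | x => simp at hxy; exact absurd ⟨x, hxy⟩ h1
      | p y => simp at hxy; rw [h2 hxy]

lemma injSum_contract {A : Type*} [CommRing A] {d : ℕ} (w : Fin d → A) (hw : ∀ a, w a * w a = 1)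
    (k : ℕ) (j : Fin (k + 1)) :
    (∑ f : Fin (k + 1) → Fin d, if Function.Injective f then w (f j) * ∏ i, w (f i) else 0)
      = ((d : A) - k) * injSum w k := by
  classical
  unfold injSum
  rw [← (Fin.insertNthEquiv (fun _ : Fin (k + 1) => Fin d) j).sum_comp, Fintype.sum_prod_type,
    Finset.sum_comm, Finset.mul_sum]
  refine Finset.sum_congr rfl fun g _ => ?_
  have key : ∀ a, Function.Injective
      ((Fin.insertNthEquiv (fun _ : Fin (k + 1) => Fin d) j) (a, g)) ↔
      a ∉ Set.range g ∧ Function.Injective g := fun a => insertNth_inj_iff j a g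
  simp only [Fin.insertNthEquiv_apply, Fin.prod_univ_succAbove _ j,
    Fin.insertNth_apply_same, Fin.insertNth_apply_succAbove, ← mul_assoc, hw, one_mul]
  split_ifs with hg
  · rw [← Finset.sum_filter, Finset.filter_congr (q := fun a => a ∉ Set.range g)
      (fun a _ => (key a).trans (and_iff_left hg)), Finset.sum_const, nsmul_eq_mul]
    congr 1
    have h1 : (Finset.univ.filter fun a => a ∉ Set.range g) = (Finset.univ.image g)ᶜ := by
      ext a; simp
    have h2 := Finset.card_add_card_compl (Finset.univ.image g)
    rw [Finset.card_image_of_injective _ hg] at h2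
    simp only [Finset.card_univ, Fintype.card_fin] at h2
    have h3 := congrArg (Nat.cast : ℕ → A) h2
    rw [Nat.cast_add] at h3
    rw [h1, ← h3]
    ring
  · rw [mul_zero]
    refine Finset.sum_eq_zero fun a _ => ?_
    rw [if_neg (fun h => hg ((key a).1 h).2)]

lemma injSum_rec {A : Type*} [CommRing A] {d : ℕ} (w : Fin d → A) (hw : ∀ a, w a * w a = 1)
    (k : ℕ) :
    (∑ a, w a) * injSum w (k + 1) =
      injSum w (k + 2) + ((k : A) + 1) * ((d : A) - k) * injSum w k := by
  classical
  have h : ((k : A) + 1) * ((d : A) - k) * injSum w k =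
      ∑ j : Fin (k + 1), ∑ f : Fin (k + 1) → Fin d,
        if Function.Injective f then w (f j) * ∏ i, w (f i) else 0 := by
    rw [Finset.sum_congr rfl fun j _ => injSum_contract w hw k j]
    simp [mul_assoc]
  rw [h, Finset.sum_comm, injSum_succ w (k + 1), ← Finset.sum_add_distrib, injSum, Finset.mul_sum]
  refine Finset.sum_congr rfl fun f _ => ?_
  split_ifs with hf
  · rw [← Finset.sum_image (f := fun a => w a * ∏ i, w (f i)) (s := Finset.univ) (g := f)
      (fun x _ y _ hxy => hf hxy), Finset.sum_mul]
    have : Finset.univ.image f = Finset.univ.filter (fun a => a ∈ Set.range f) := by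
      ext a; simp
    rw [this, Finset.sum_filter, ← Finset.sum_add_distrib]
    refine Finset.sum_congr rfl fun a _ => ?_
    split_ifs <;> simp
  · simp

lemma kron_list_prod {N : ℕ} (l : List (Matrix (Fin N) (Fin N) ℂ)) :
    l.prod ⊗ₖ l.prod = (l.map fun x => x ⊗ₖ x).prod := by
  induction l with
  | nil => simp
  | cons x l ih => simp only [List.prod_cons, List.map_cons, ← ih, Matrix.mul_kronecker_mul]

/-- Recurrence `I_{m+1} = z·I_m − (m/4)(d − m + 1)·I_{m−1}` for the invariants of a
Clifford family, where `z = (1/2)·Σ_a γ^a ⊗ γ^a`. -/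
theorem cliffInv_recurrence {d N : ℕ} (γ : Fin d → Matrix (Fin N) (Fin N) ℂ)
    (hγ : ∀ a b, γ a * γ b + γ b * γ a =
      if a = b then (2 : ℂ) • (1 : Matrix (Fin N) (Fin N) ℂ) else 0)
    (z : Matrix (Fin N × Fin N) (Fin N × Fin N) ℂ)
    (hz : z = (1/2 : ℂ) • ∑ a, γ a ⊗ₖ γ a)
    (m : ℕ) (hm : 1 ≤ m) :
    cliffInv γ (m + 1) =
      z * cliffInv γ m - (((m : ℂ) / 4) * ((d : ℂ) - (m : ℂ) + 1)) • cliffInv γ (m - 1) := by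
  classical
  obtain ⟨k, rfl⟩ : ∃ k, m = k + 1 := ⟨m - 1, by omega⟩
  have hsq : ∀ a, γ a * γ a = 1 := by
    intro a
    have h := hγ a a
    rw [if_pos rfl, ← two_smul ℂ] at h
    exact smul_right_injective _ (two_ne_zero (α := ℂ)) h
  have hcomm : ∀ x ∈ Set.range (fun a => γ a ⊗ₖ γ a), ∀ y ∈ Set.range (fun a => γ a ⊗ₖ γ a),
      x * y = y * x := by
    rintro _ ⟨a, rfl⟩ _ ⟨b, rfl⟩
    by_cases hab : a = b
    · rw [hab]
    · have h := hγ a b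
      rw [if_neg hab] at h
      have h' : γ a * γ b = (-1 : ℂ) • (γ b * γ a) := by
        rw [neg_one_smul]; exact eq_neg_of_add_eq_zero_left h
      simp only [← Matrix.mul_kronecker_mul]
      rw [h', Matrix.smul_kronecker, Matrix.kronecker_smul, smul_smul]
      simp
  let B := Algebra.adjoin ℂ (Set.range (fun a => γ a ⊗ₖ γ a))
  letI : CommRing B := Algebra.adjoinCommRingOfComm ℂ hcomm
  let w : Fin d → B := fun a => ⟨γ a ⊗ₖ γ a, Algebra.subset_adjoin ⟨a, rfl⟩⟩
  have hw : ∀ a, w a * w a = 1 := by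
    intro a
    apply Subtype.ext
    change (γ a ⊗ₖ γ a) * (γ a ⊗ₖ γ a) = 1
    rw [← Matrix.mul_kronecker_mul, hsq]
    simp
  let φ : B →+* Matrix (Fin N × Fin N) (Fin N × Fin N) ℂ :=
    { toFun := Subtype.val
      map_one' := rfl
      map_mul' := fun _ _ => rfl
      map_zero' := rfl
      map_add' := fun _ _ => rfl }
  have hφw : ∀ a, φ (w a) = γ a ⊗ₖ γ a := fun a => rfl
  have hI : ∀ n, cliffInv γ n = ((2 : ℂ) ^ n)⁻¹ • φ (injSum w n) := by
    intro n
    unfold cliffInv injSum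
    rw [map_sum, Finset.sum_filter]
    congr 1
    refine Finset.sum_congr rfl fun f _ => ?_
    split_ifs with hf
    · rw [kron_list_prod, ← List.prod_ofFn, map_list_prod, List.map_ofFn, List.map_ofFn]
      rfl
    · simp
  have hrec := congrArg φ (injSum_rec w hw k)
  simp only [map_mul, map_add, map_sub, map_sum, map_natCast, map_one, hφw] at hrec
  have hc : ((k : Matrix (Fin N × Fin N) (Fin N × Fin N) ℂ) + 1) *
      ((d : Matrix (Fin N × Fin N) (Fin N × Fin N) ℂ) - (k : Matrix (Fin N × Fin N) (Fin N × Fin N) ℂ))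
      * φ (injSum w k) = (((k : ℂ) + 1) * ((d : ℂ) - k)) • φ (injSum w k) := by
    rw [Algebra.smul_def]
    simp
  rw [hc] at hrec
  rw [hI, hI, hI, hz, smul_mul_smul_comm, hrec, Nat.add_sub_cancel, smul_add, smul_smul, smul_smul]
  have e1 : (1 / 2 : ℂ) * (2 ^ (k + 1))⁻¹ = (2 ^ (k + 1 + 1))⁻¹ := by
    field_simp
    try ring
  have e2 : (((k + 1 : ℕ) : ℂ) / 4 * ((d : ℂ) - ((k + 1 : ℕ) : ℂ) + 1)) * (2 ^ k)⁻¹ =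
      1 / 2 * (2 ^ (k + 1))⁻¹ * (((k : ℂ) + 1) * ((d : ℂ) - k)) := by
    push_cast
    field_simp
    try ring
  rw [e2, e1, add_sub_cancel_right]
end

section
/- Let m ≥ 1 and let γ^1,…,γ^{2m} be a Clifford family of N×N complex matrices in dimension d = 2m. Then the matrix z = (1/2)·Σ_{a=1}^{2m} γ^a ⊗ γ^a satisfies the characteristic polynomial identity ∏_{k=−m}^{m} (z − k·1) = 0; that is, z·(z²−1)·(z²−4)⋯(z²−m²) = 0. In particular, for so(4) one has z(z²−1)(z²−4) = 0, and for so(6) one has z(z²−1)(z²−4)(z²−9) = 0. -/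
open Kronecker

theorem sign_split {A ι : Type*} [Ring A] [Algebra ℂ A] [DecidableEq ι] (G : ι → A)
    (hc : ∀ a b, G a * G b = G b * G a) (hs : ∀ a, G a * G a = 1) (T : A) (s : Finset ι) :
    (∀ v, (∀ a ∈ s, G a * v = v ∨ G a * v = -v) → T * v = 0) → ∀ v, T * v = 0 := by
  induction s using Finset.induction_on with
  | empty => intro h v; exact h v (by simp)
  | insert a s ha ih =>
    intro h
    apply ih
    intro v hv
    have hp : T * (v + G a * v) = 0 := by
      apply h
      intro b hb
      rcases Finset.mem_insert.1 hb with rfl | hb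
      · left
        rw [mul_add, ← mul_assoc, hs, one_mul, add_comm]
      · rcases hv b hb with e | e
        · left; rw [mul_add, ← mul_assoc, hc b a, mul_assoc, e]
        · right; rw [mul_add, ← mul_assoc, hc b a, mul_assoc, e, mul_neg, neg_add]
    have hq : T * (v - G a * v) = 0 := by
      apply h
      intro b hb
      rcases Finset.mem_insert.1 hb with rfl | hb
      · right
        rw [mul_sub, ← mul_assoc, hs, one_mul, neg_sub]
      · rcases hv b hb with e | e
        · left; rw [mul_sub, ← mul_assoc, hc b a, mul_assoc, e]
        · right; rw [mul_sub, ← mul_assoc, hc b a, mul_assoc, e, mul_neg]; abel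
    have h2 : (2 : ℂ) • (T * v) = 0 := by
      have e : T * (v + G a * v) + T * (v - G a * v) = 0 := by rw [hp, hq, add_zero]
      rw [two_smul, ← e]
      noncomm_ring
    exact (smul_eq_zero.1 h2).resolve_left two_ne_zero

theorem list_prod_act {A : Type*} [Ring A] [Algebra ℂ A] (z v : A) (c : ℂ) (f : ℂ → ℂ)
    (h : z * v = c • v) (l : List ℂ) :
    (l.map (fun k => z - (f k) • (1 : A))).prod * v = (l.map (fun k => c - f k)).prod • v := by
  induction l with
  | nil => simp
  | cons k l ih =>
    simp only [List.map_cons, List.prod_cons]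
    rw [mul_assoc, ih, mul_smul_comm, sub_mul, h, smul_mul_assoc, one_mul, ← sub_smul, smul_smul,
      mul_comm]

/-- Characteristic polynomial identity for `z = (1/2)·Σ_{a=1}^{2m} γ^a ⊗ γ^a` built from a
Clifford family in even dimension `d = 2m`:
`∏_{k=-m}^{m} (z − k·1) = 0`, i.e. `z(z²−1)(z²−4)⋯(z²−m²) = 0`. -/
theorem clifford_z_char_poly_even {m N : ℕ} (hm : 1 ≤ m)
    (γ : Fin (2 * m) → Matrix (Fin N) (Fin N) ℂ)
    (hγ : ∀ a b, γ a * γ b + γ b * γ a =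
      if a = b then (2 : ℂ) • (1 : Matrix (Fin N) (Fin N) ℂ) else 0)
    (z : Matrix (Fin N × Fin N) (Fin N × Fin N) ℂ)
    (hz : z = (1/2 : ℂ) • ∑ a, γ a ⊗ₖ γ a) :
    ((List.range (2 * m + 1)).map
      (fun k => z - (((k : ℂ) - (m : ℂ)) • (1 : Matrix (Fin N × Fin N) (Fin N × Fin N) ℂ)))).prod
      = 0 := by
  have hsq : ∀ a, γ a * γ a = 1 := by
    intro a
    have h := hγ a a
    rw [if_pos rfl, ← two_smul ℂ] at h
    exact smul_right_injective _ (two_ne_zero (α := ℂ)) h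
  have hc : ∀ a b, (γ a ⊗ₖ γ a) * (γ b ⊗ₖ γ b) = (γ b ⊗ₖ γ b) * (γ a ⊗ₖ γ a) := by
    intro a b
    by_cases hab : a = b
    · rw [hab]
    · have h := hγ a b
      rw [if_neg hab] at h
      have h' := eq_neg_of_add_eq_zero_left h
      rw [← Matrix.mul_kronecker_mul, ← Matrix.mul_kronecker_mul, h']
      ext i j
      simp [Matrix.kroneckerMap_apply]
  have hs : ∀ a, (γ a ⊗ₖ γ a) * (γ a ⊗ₖ γ a) = 1 := by
    intro a
    rw [← Matrix.mul_kronecker_mul, hsq, Matrix.one_kronecker_one]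
  have key := sign_split (fun a => γ a ⊗ₖ γ a) hc hs
    ((List.range (2 * m + 1)).map
      (fun k => z - (((k : ℂ) - (m : ℂ)) • (1 : Matrix (Fin N × Fin N) (Fin N × Fin N) ℂ)))).prod
    Finset.univ ?_ 1
  · simpa using key
  intro v hv
  classical
  let P : Finset (Fin (2 * m)) := Finset.univ.filter (fun a => (γ a ⊗ₖ γ a) * v = v)
  have hact : ∀ a, (γ a ⊗ₖ γ a) * v = (if (γ a ⊗ₖ γ a) * v = v then (2 : ℂ) else 0) • v - v := by
    intro a
    split_ifs with e
    · rw [e, two_smul]; abel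
    · rw [zero_smul, zero_sub]
      exact (hv a (Finset.mem_univ a)).resolve_left e
  have hzv : z * v = ((P.card : ℂ) - m) • v := by
    rw [hz, smul_mul_assoc, Finset.sum_mul, Finset.sum_congr rfl (fun a _ => hact a),
      Finset.sum_sub_distrib, ← Finset.sum_smul, Finset.sum_const, Finset.card_univ,
      Fintype.card_fin, ← Finset.sum_filter, Finset.sum_const, ← Nat.cast_smul_eq_nsmul ℂ (2 * m),
      ← sub_smul, smul_smul]
    congr 1
    change 1 / 2 * (P.card • (2 : ℂ) - _) = _
    rw [nsmul_eq_mul]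
    push_cast
    ring
  rw [list_prod_act z v _ (fun k : ℂ => k - m) hzv]
  rw [List.prod_eq_zero, zero_smul]
  rw [List.mem_map]
  refine ⟨(P.card : ℂ), ?_, by ring⟩
  have := Finset.card_le_univ P
  rw [Fintype.card_fin] at this
  simp only [List.bind_eq_flatMap, List.pure_def, List.mem_flatMap, List.mem_range,
    List.mem_singleton]
  exact ⟨P.card, by omega, rfl⟩
end

section
/- Let m ≥ 0 and let γ^1,…,γ^{2m+1} be a Clifford family of complex matrices of size N = 2^m in odd dimension d = 2m+1. Then the matrix z = (1/2)·Σ_{a=1}^{2m+1} γ^a ⊗ γ^a satisfies the reduced characteristic polynomial identity ∏_{k=0}^{m} (z − (−1)^k·(2k+1)/2 · 1) = 0. In particular, for so(3) (Pauli matrices) one has (z − 1/2)(z + 3/2) = 0, and for so(5) one has (z − 1/2)(z + 3/2)(z − 5/2) = 0. -/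
open Kronecker

/-- The trace of an idempotent matrix is a natural number. -/
lemma cz_trace_nat {N : ℕ} (Q : Matrix (Fin N) (Fin N) ℂ) (hQ : Q * Q = Q) :
    ∃ r : ℕ, Q.trace = r := by
  have h1 : IsIdempotentElem (Matrix.toLin' Q) := by
    unfold IsIdempotentElem
    rw [Module.End.mul_eq_comp, ← Matrix.toLin'_mul, hQ]
  have h2 := (LinearMap.isProj_range_iff_isIdempotentElem _).2 h1
  exact ⟨_, (Matrix.trace_toLin'_eq Q).symm.trans h2.trace⟩

lemma cz_eq_zero {N : ℕ} (Q : Matrix (Fin N) (Fin N) ℂ) (hQ : Q * Q = Q)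
    (ht : Q.trace = 0) : Q = 0 := by
  have h1 : IsIdempotentElem (Matrix.toLin' Q) := by
    unfold IsIdempotentElem
    rw [Module.End.mul_eq_comp, ← Matrix.toLin'_mul, hQ]
  have h2 := LinearMap.IsIdempotentElem.eq_zero_of_trace_eq_zero h1
    (by rw [Matrix.trace_toLin'_eq]; exact ht)
  exact Matrix.toLin'.injective (by rw [h2, map_zero])

/-- The trace of an idempotent commuting with a Clifford family of `2m` elements is divisible by
`2^m`. -/
lemma cz_trace_dvd {N : ℕ} (g : ℕ → Matrix (Fin N) (Fin N) ℂ) (m : ℕ) :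
    ∀ (Q : Matrix (Fin N) (Fin N) ℂ), (∀ a < 2 * m, g a * g a = 1) →
    (∀ a < 2 * m, ∀ b < 2 * m, a ≠ b → g a * g b = -(g b * g a)) →
    (∀ a < 2 * m, g a * Q = Q * g a) → Q * Q = Q →
    ∃ r : ℕ, Q.trace = 2 ^ m * r := by
  induction m with
  | zero =>
    intro Q _ _ _ hQ
    obtain ⟨r, hr⟩ := cz_trace_nat Q hQ
    exact ⟨r, by simpa using hr⟩
  | succ m ih =>
    intro Q h1 h2 hc hQ
    obtain ⟨x, hx⟩ : ∃ x, x = g (2 * m) := ⟨_, rfl⟩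
    obtain ⟨y, hy⟩ : ∃ y, y = g (2 * m + 1) := ⟨_, rfl⟩
    have hxx : x * x = 1 := by rw [hx]; exact h1 _ (by omega)
    have hyy : y * y = 1 := by rw [hy]; exact h1 _ (by omega)
    have hxy : x * y = -(y * x) := by
      rw [hx, hy]; exact h2 _ (by omega) _ (by omega) (by omega)
    have hxQ : x * Q = Q * x := by rw [hx]; exact hc _ (by omega)
    have hyQ : y * Q = Q * y := by rw [hy]; exact hc _ (by omega)
    obtain ⟨U, hU⟩ : ∃ U, U = Complex.I • (x * y) := ⟨_, rfl⟩
    have hT : (x * y) * (x * y) = -1 := by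
      calc (x * y) * (x * y) = x * (y * x) * y := by simp only [mul_assoc]
        _ = x * (-(x * y)) * y := by rw [hxy, neg_neg]
        _ = -((x * x) * (y * y)) := by simp only [mul_assoc, mul_neg, neg_mul]
        _ = -1 := by rw [hxx, hyy, mul_one]
    have hUU : U * U = 1 := by
      rw [hU, smul_mul_smul_comm, hT, Complex.I_mul_I]; simp
    have hUQ : U * Q = Q * U := by
      rw [hU, smul_mul_assoc, mul_smul_comm, mul_assoc, hyQ, ← mul_assoc, hxQ, mul_assoc]
    have htr : (Q * U).trace = 0 := by
      have e1 : (Q * (x * y)).trace = -(Q * (x * y)).trace := by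
        calc (Q * (x * y)).trace = ((Q * x) * y).trace := by rw [mul_assoc]
          _ = (y * (Q * x)).trace := Matrix.trace_mul_comm _ _
          _ = (Q * (y * x)).trace := by rw [← mul_assoc, hyQ, mul_assoc]
          _ = _ := by rw [hxy, mul_neg, Matrix.trace_neg, neg_neg]
      have e2 : (Q * (x * y)).trace = 0 := by
        linear_combination (1/2 : ℂ) * e1
      rw [hU, mul_smul_comm, Matrix.trace_smul, e2, smul_zero]
    have key := ih ((1/2 : ℂ) • (Q + Q * U)) (fun a ha => h1 a (by omega))
      (fun a ha b hb => h2 a (by omega) b (by omega)) ?_ ?_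
    · obtain ⟨r, hr⟩ := key
      refine ⟨r, ?_⟩
      rw [Matrix.trace_smul, Matrix.trace_add, htr, add_zero, smul_eq_mul] at hr
      rw [pow_succ]
      linear_combination 2 * hr
    · intro a ha
      have hax : g a * x = -(x * g a) := by
        rw [hx]; exact h2 _ (by omega) _ (by omega) (by omega)
      have hay : g a * y = -(y * g a) := by
        rw [hy]; exact h2 _ (by omega) _ (by omega) (by omega)
      have haQ : g a * Q = Q * g a := hc a (by omega)
      have haU : g a * U = U * g a := by
        rw [hU, mul_smul_comm, smul_mul_assoc, ← mul_assoc, hax, neg_mul, mul_assoc, hay, mul_neg,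
          neg_neg, mul_assoc]
      rw [mul_smul_comm, smul_mul_assoc, mul_add, add_mul, ← mul_assoc, haQ, mul_assoc, haU,
        mul_assoc]
    · have e1 : Q * (Q * U) = Q * U := by rw [← mul_assoc, hQ]
      have e2 : (Q * U) * Q = Q * U := by rw [mul_assoc, hUQ, e1]
      have e3 : (Q * U) * (Q * U) = Q := by
        rw [← mul_assoc, e2, mul_assoc, hUU, mul_one]
      rw [smul_mul_smul_comm, mul_add, add_mul, add_mul, hQ, e1, e2, e3]
      module

/-- Ordered product of the first `k` elements. -/
def czG {M : Type*} [Ring M] (g : ℕ → M) : ℕ → M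
  | 0 => 1
  | k + 1 => czG g k * g k

lemma czG_anti {M : Type*} [Ring M] (g : ℕ → M) (d : ℕ)
    (h2 : ∀ a < d, ∀ b < d, a ≠ b → g a * g b = -(g b * g a)) (k : ℕ) :
    ∀ a < d, k ≤ a → g a * czG g k = (-1) ^ k * (czG g k * g a) := by
  induction k with
  | zero => intro a _ _; simp [czG]
  | succ k ih =>
    intro a ha hk
    rw [czG, ← mul_assoc, ih a ha (by omega)]
    simp only [mul_assoc]
    rw [h2 a ha k (by omega) (by omega), pow_succ]
    simp

lemma czG_comm {M : Type*} [Ring M] (g : ℕ → M) (d : ℕ)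
    (h2 : ∀ a < d, ∀ b < d, a ≠ b → g a * g b = -(g b * g a)) (k : ℕ) (hk : k ≤ d) :
    ∀ a < k, g a * czG g k = (-1) ^ (k + 1) * (czG g k * g a) := by
  induction k with
  | zero => intro a ha; omega
  | succ k ih =>
    intro a ha
    have e : (-1 : M) ^ (k + 1 + 1) = (-1) ^ k := by rw [pow_succ, pow_succ]; simp
    rw [e]
    rcases Nat.lt_succ_iff_lt_or_eq.1 ha with h | h
    · rw [czG, ← mul_assoc, ih (by omega) a h]
      simp only [mul_assoc]
      rw [h2 a (by omega) k (by omega) (by omega), pow_succ]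
      simp
    · subst h
      rw [czG, ← mul_assoc, czG_anti g d h2 a a (by omega) le_rfl]
      simp only [mul_assoc]

lemma czG_sq {M : Type*} [Ring M] (g : ℕ → M) (d : ℕ)
    (h1 : ∀ a < d, g a * g a = 1)
    (h2 : ∀ a < d, ∀ b < d, a ≠ b → g a * g b = -(g b * g a)) (k : ℕ) (hk : k ≤ d) :
    czG g k * czG g k = (-1) ^ (∑ i ∈ Finset.range k, i) := by
  induction k with
  | zero => simp [czG]
  | succ k ih =>
    have hc : Commute ((-1 : M) ^ k) (czG g k) := (Commute.neg_one_left _).pow_left k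
    calc czG g k * g k * (czG g k * g k) = czG g k * (g k * czG g k) * g k := by
            simp only [mul_assoc]
      _ = (-1) ^ k * (czG g k * czG g k) * (g k * g k) := by
            rw [czG_anti g d h2 k k (by omega) le_rfl, ← mul_assoc, ← hc.eq]
            simp only [mul_assoc]
      _ = _ := by
            rw [h1 k (by omega), ih (by omega), Finset.sum_range_succ, mul_one, pow_add]
            exact (Commute.pow_pow_self _ _ _).eq

lemma cz_parity (m : ℕ) : (-1 : ℤ) ^ (∑ i ∈ Finset.range (2 * m + 1), i) = (-1) ^ m := by
  induction m with
  | zero => simp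
  | succ m ih =>
    rw [show 2 * (m + 1) + 1 = 2 * m + 1 + 1 + 1 by ring, Finset.sum_range_succ,
      Finset.sum_range_succ, pow_add, pow_add, ih, pow_succ, pow_succ, pow_succ]
    have : (-1 : ℤ) ^ (2 * m) = 1 := by rw [pow_mul]; simp
    rw [this]; ring

/-- The commutative core. -/
lemma cz_core {A : Type*} [CommRing A] [Algebra ℂ A] (m : ℕ) (e : ℕ → A)
    (he : ∀ a < 2 * m + 1, e a * e a = 1)
    (hp : ∏ a ∈ Finset.range (2 * m + 1), e a = (-1) ^ m) :
    ∏ k ∈ Finset.range (m + 1), ((1/2 : ℂ) • ∑ a ∈ Finset.range (2 * m + 1), e a -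
      (((-1 : ℂ) ^ k * (2 * (k : ℂ) + 1) / 2) • (1 : A))) = 0 := by
  set R := Finset.range (2 * m + 1) with hR
  set X := ∏ k ∈ Finset.range (m + 1), ((1/2 : ℂ) • ∑ a ∈ R, e a -
      (((-1 : ℂ) ^ k * (2 * (k : ℂ) + 1) / 2) • (1 : A))) with hX
  have hone : (1 : A) = ∏ a ∈ R, ((1/2 : ℂ) • (1 - e a) + (1/2 : ℂ) • (1 + e a)) := by
    symm
    apply Finset.prod_eq_one
    intro a _
    module
  rw [Finset.prod_add] at hone
  rw [← mul_one X, hone, Finset.mul_sum]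
  apply Finset.sum_eq_zero
  intro S hS
  rw [Finset.mem_powerset] at hS
  set P := (∏ i ∈ S, (1/2 : ℂ) • (1 - e i)) * ∏ i ∈ R \ S, (1/2 : ℂ) • (1 + e i) with hP
  have hin : ∀ a ∈ S, e a * P = -P := by
    intro a ha
    have h := he a (Finset.mem_range.1 (hS ha))
    have h3 : e a * ((1/2 : ℂ) • (1 - e a)) = -((1/2 : ℂ) • (1 - e a)) := by
      rw [mul_smul_comm, mul_sub, h, mul_one]; module
    rw [hP, ← Finset.mul_prod_erase S _ ha, ← mul_assoc, ← mul_assoc, h3]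
    ring
  have hout : ∀ a ∈ R \ S, e a * P = P := by
    intro a ha
    have h := he a (Finset.mem_range.1 (Finset.mem_sdiff.1 ha).1)
    have h3 : e a * ((1/2 : ℂ) • (1 + e a)) = ((1/2 : ℂ) • (1 + e a)) := by
      rw [mul_smul_comm, mul_add, h, mul_one]; module
    rw [hP, ← Finset.mul_prod_erase (R \ S) _ ha, mul_left_comm, ← mul_assoc (e a), h3]
  have hcard : (R \ S).card + S.card = 2 * m + 1 := by
    rw [Finset.card_sdiff_add_card_eq_card hS, hR, Finset.card_range]
  have hsum : (∑ a ∈ R, e a) * P = ((2 * m + 1 : ℂ) - 2 * S.card) • P := by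
    rw [Finset.sum_mul, ← Finset.sum_sdiff hS, Finset.sum_congr rfl hout,
      Finset.sum_congr rfl hin, Finset.sum_const, Finset.sum_const, ← Nat.cast_smul_eq_nsmul ℂ,
      ← Nat.cast_smul_eq_nsmul ℂ, smul_neg, ← sub_eq_add_neg, ← sub_smul]
    congr 1
    have : ((R \ S).card : ℂ) + S.card = 2 * m + 1 := by exact_mod_cast hcard
    linear_combination this
  have hprodS : ∀ T ⊆ S, (∏ a ∈ T, e a) * P = (-1) ^ T.card * P := by
    intro T
    induction T using Finset.induction_on with
    | empty => simp
    | insert a T ha ih =>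
      intro hT
      rw [Finset.prod_insert ha, Finset.card_insert_of_notMem ha, mul_assoc,
        ih (fun x hx => hT (Finset.mem_insert_of_mem hx)), mul_left_comm,
        hin a (hT (Finset.mem_insert_self _ _)), pow_succ]
      ring
  have hprodR : ∀ T ⊆ R \ S, (∏ a ∈ T, e a) * P = P := by
    intro T
    induction T using Finset.induction_on with
    | empty => simp
    | insert a T ha ih =>
      intro hT
      rw [Finset.prod_insert ha, mul_assoc,
        ih (fun x hx => hT (Finset.mem_insert_of_mem hx)),
        hout a (hT (Finset.mem_insert_self _ _))]
  have hprod : (-1) ^ m * P = (-1) ^ S.card * P := by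
    rw [← hp, ← Finset.prod_sdiff hS, mul_assoc, hprodS S subset_rfl, mul_left_comm,
      hprodR _ subset_rfl]
  by_cases hpar : (m + S.card) % 2 = 0
  · -- a factor vanishes
    obtain ⟨k, hk, hkv⟩ : ∃ k < m + 1,
        ((2 * m + 1 : ℂ) - 2 * S.card) = (-1 : ℂ) ^ k * (2 * (k : ℂ) + 1) := by
      rcases le_total S.card m with h | h
      · refine ⟨m - S.card, by omega, ?_⟩
        rw [Even.neg_one_pow (by rw [Nat.even_iff]; omega), Nat.cast_sub h]; ring
      · rcases Nat.eq_or_lt_of_le h with h | h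
        · refine ⟨0, by omega, ?_⟩
          rw [← h]; simp
        · refine ⟨S.card - (m + 1), by omega, ?_⟩
          rw [Odd.neg_one_pow (by rw [Nat.odd_iff]; omega), Nat.cast_sub h]
          push_cast; ring
    rw [hX, ← Finset.mul_prod_erase _ _ (Finset.mem_range.2 hk), mul_right_comm]
    have : ((1/2 : ℂ) • ∑ a ∈ R, e a -
      (((-1 : ℂ) ^ k * (2 * (k : ℂ) + 1) / 2) • (1 : A))) * P = 0 := by
      rw [sub_mul, smul_mul_assoc, hsum, hkv, smul_mul_assoc, one_mul]
      module
    rw [this, zero_mul]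
  · have h2 : (-1 : A) ^ m * (-1) ^ S.card = -1 := by
      rw [← pow_add, Odd.neg_one_pow (by rw [Nat.odd_iff]; omega)]
    have h3 : (-1 : A) ^ m * (-1) ^ m = 1 := by
      rw [← pow_add, Even.neg_one_pow ⟨m, rfl⟩]
    have h4 : P = -P := by
      calc P = (-1 : A) ^ m * ((-1) ^ m * P) := by rw [← mul_assoc, h3, one_mul]
        _ = -P := by rw [hprod, ← mul_assoc, h2]; ring
    have h5 : P = 0 := by
      have : P = (1/2 : ℂ) • (P + P) := by module
      rw [this]; nth_rewrite 1 [h4]; simp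
    rw [h5, mul_zero]

open scoped IsMulCommutative in
lemma cz_core' {A : Type*} [Ring A] [Algebra ℂ A] (m : ℕ) (E : ℕ → A)
    (hcomm : ∀ a b, E a * E b = E b * E a)
    (he : ∀ a < 2 * m + 1, E a * E a = 1)
    (hp : ((List.range (2 * m + 1)).map E).prod = (-1) ^ m) :
    ((List.range (m + 1)).map (fun k : ℕ => (1/2 : ℂ) • ∑ a ∈ Finset.range (2 * m + 1), E a -
      (((-1 : ℂ) ^ k * (2 * (k : ℂ) + 1) / 2) • (1 : A)))).prod = 0 := by
  have := Algebra.isMulCommutative_adjoin ℂ (s := Set.range E)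
    (by rintro _ ⟨a, rfl⟩ _ ⟨b, rfl⟩; exact hcomm a b)
  obtain ⟨e, hE⟩ : ∃ e : ℕ → Algebra.adjoin ℂ (Set.range E), ∀ n, (e n : A) = E n :=
    ⟨fun n => ⟨E n, Algebra.subset_adjoin ⟨n, rfl⟩⟩, fun n => rfl⟩
  have hlist : ∀ (f : ℕ → Algebra.adjoin ℂ (Set.range E)) (k : ℕ),
      ((∏ a ∈ Finset.range k, f a : Algebra.adjoin ℂ (Set.range E)) : A)
      = ((List.range k).map (fun n => (f n : A))).prod := by
    intro f k
    induction k with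
    | zero => simp
    | succ k ih =>
      rw [Finset.prod_range_succ, List.prod_range_succ, ← ih]
      rfl
  have hcore := cz_core m e
    (fun a ha => by
      apply Subtype.ext
      have := he a ha
      rw [← hE] at this
      exact this)
    (by
      apply Subtype.ext
      rw [hlist]
      simp only [hE]
      rw [hp]
      simp)
  have hval := congrArg (Subtype.val) hcore
  rw [hlist] at hval
  simpa [hE] using hval

/-- The volume element is a scalar, so its Kronecker square is its square. -/
lemma cz_kron (m : ℕ) (g : ℕ → Matrix (Fin (2 ^ m)) (Fin (2 ^ m)) ℂ)
    (h1 : ∀ a < 2 * m + 1, g a * g a = 1)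
    (h2 : ∀ a < 2 * m + 1, ∀ b < 2 * m + 1, a ≠ b → g a * g b = -(g b * g a)) :
    czG g (2 * m + 1) ⊗ₖ czG g (2 * m + 1) = (-1) ^ m := by
  set V := czG g (2 * m + 1) with hV
  have hc : ∀ a < 2 * m + 1, g a * V = V * g a := by
    intro a ha
    rw [hV, czG_comm g _ h2 _ le_rfl a ha, Even.neg_one_pow ⟨m + 1, by ring⟩, one_mul]
  have hsq : V * V = ((-1 : ℂ) ^ m) • 1 := by
    rw [hV, czG_sq g _ h1 h2 _ le_rfl]
    have := congrArg (Int.cast : ℤ → Matrix (Fin (2 ^ m)) (Fin (2 ^ m)) ℂ) (cz_parity m)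
    push_cast at this
    rw [this]
    rcases Nat.even_or_odd m with h | h <;> simp [h.neg_one_pow]
  obtain ⟨t, ht⟩ : ∃ t : ℂ, t * t = (-1) ^ m := by
    obtain ⟨t, ht⟩ := IsAlgClosed.exists_pow_nat_eq ((-1 : ℂ) ^ m) (n := 2) (by norm_num)
    exact ⟨t, by rw [← ht, sq]⟩
  have hmm : ((-1 : ℂ) ^ m) * (-1) ^ m = 1 := by
    rw [← pow_add, Even.neg_one_pow ⟨m, rfl⟩]
  have h4 : (t * (-1) ^ m) * t = 1 := by
    linear_combination (-1) ^ m * ht + hmm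
  obtain ⟨W, hW⟩ : ∃ W, W = (t * (-1) ^ m) • V := ⟨_, rfl⟩
  have hWW : W * W = 1 := by
    rw [hW, smul_mul_smul_comm, hsq, smul_smul]
    have : t * (-1) ^ m * (t * (-1) ^ m) * (-1) ^ m = 1 := by
      linear_combination h4 + t * t * (-1) ^ m * hmm
    rw [this, one_smul]
  have hVW : V = t • W := by
    rw [hW, smul_smul, mul_comm, h4, one_smul]
  have hQQ : ((1/2 : ℂ) • (1 + W)) * ((1/2 : ℂ) • (1 + W)) = (1/2 : ℂ) • (1 + W) := by
    rw [smul_mul_smul_comm, mul_add, add_mul, add_mul, hWW, one_mul, mul_one, one_mul]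
    module
  have hQQ' : ((1/2 : ℂ) • (1 - W)) * ((1/2 : ℂ) • (1 - W)) = (1/2 : ℂ) • (1 - W) := by
    rw [smul_mul_smul_comm, mul_sub, sub_mul, sub_mul, hWW, one_mul, mul_one, one_mul]
    module
  have hcW : ∀ a < 2 * m + 1, g a * W = W * g a := by
    intro a ha
    rw [hW, mul_smul_comm, hc a ha, smul_mul_assoc]
  obtain ⟨r, hr⟩ := cz_trace_dvd g m ((1/2 : ℂ) • (1 + W)) (fun a ha => h1 a (by omega))
    (fun a ha b hb => h2 a (by omega) b (by omega))
    (fun a ha => by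
      rw [mul_smul_comm, mul_add, hcW a (by omega), smul_mul_assoc, add_mul, one_mul, mul_one]) hQQ
  obtain ⟨s, hs⟩ := cz_trace_dvd g m ((1/2 : ℂ) • (1 - W)) (fun a ha => h1 a (by omega))
    (fun a ha b hb => h2 a (by omega) b (by omega))
    (fun a ha => by
      rw [mul_smul_comm, mul_sub, hcW a (by omega), smul_mul_assoc, sub_mul, one_mul, mul_one])
    hQQ'
  have hrs : r + s = 1 := by
    have e1 : (2 : ℂ) ^ m * (r + s) = 2 ^ m * 1 := by
      rw [mul_add, ← hr, ← hs, ← Matrix.trace_add, ← smul_add]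
      have : (1 / 2 : ℂ) • (1 + W + (1 - W)) = 1 := by module
      rw [this, Matrix.trace_one]; simp
    have e2 := mul_left_cancel₀ (pow_ne_zero m two_ne_zero) e1
    exact_mod_cast e2
  have hfin : ∃ c : ℂ, c * c = 1 ∧ W = c • 1 := by
    rcases Nat.eq_zero_or_pos r with h | h
    · refine ⟨-1, by norm_num, ?_⟩
      have h0 := cz_eq_zero _ hQQ (by rw [hr, h]; simp)
      have : W = (2 : ℂ) • ((1/2 : ℂ) • (1 + W)) - 1 := by module
      rw [this, h0]; module
    · refine ⟨1, by norm_num, ?_⟩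
      have h0 := cz_eq_zero _ hQQ' (by rw [hs, show s = 0 by omega]; simp)
      have : W = 1 - (2 : ℂ) • ((1/2 : ℂ) • (1 - W)) := by module
      rw [this, h0]; module
  obtain ⟨c, hcc, hWc⟩ := hfin
  rw [hVW, hWc, smul_smul, Matrix.smul_kronecker, Matrix.kronecker_smul, Matrix.one_kronecker_one,
    smul_smul]
  have : t * c * (t * c) = (-1) ^ m := by linear_combination t * t * hcc + ht
  rw [this]
  rcases Nat.even_or_odd m with h | h <;> simp [h.neg_one_pow]

/-- Reduced characteristic polynomial identity for `z = (1/2)·Σ_{a=1}^{2m+1} γ^a ⊗ γ^a`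
built from a Clifford family of size `N = 2^m` in odd dimension `d = 2m+1`:
`∏_{k=0}^{m} (z − (−1)^k·(2k+1)/2 · 1) = 0`. -/
theorem clifford_z_char_poly_odd {m : ℕ}
    (γ : Fin (2 * m + 1) → Matrix (Fin (2 ^ m)) (Fin (2 ^ m)) ℂ)
    (hγ : ∀ a b, γ a * γ b + γ b * γ a =
      if a = b then (2 : ℂ) • (1 : Matrix (Fin (2 ^ m)) (Fin (2 ^ m)) ℂ) else 0)
    (z : Matrix (Fin (2 ^ m) × Fin (2 ^ m)) (Fin (2 ^ m) × Fin (2 ^ m)) ℂ)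
    (hz : z = (1/2 : ℂ) • ∑ a, γ a ⊗ₖ γ a) :
    ((List.range (m + 1)).map
      (fun k => z - (((-1 : ℂ) ^ k * (2 * (k : ℂ) + 1) / 2) •
        (1 : Matrix (Fin (2 ^ m) × Fin (2 ^ m)) (Fin (2 ^ m) × Fin (2 ^ m)) ℂ)))).prod
      = 0 := by
  obtain ⟨g, hg⟩ : ∃ g : ℕ → Matrix (Fin (2 ^ m)) (Fin (2 ^ m)) ℂ,
      g = fun n => if h : n < 2 * m + 1 then γ ⟨n, h⟩ else 0 := ⟨_, rfl⟩
  have hgγ : ∀ a : Fin (2 * m + 1), γ a = g a := by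
    intro a; rw [hg]; simp only [dif_pos a.isLt]
  have h1 : ∀ a < 2 * m + 1, g a * g a = 1 := by
    intro a ha
    have := hγ ⟨a, ha⟩ ⟨a, ha⟩
    rw [if_pos rfl, hgγ] at this
    have e : g a * g a = (1/2 : ℂ) • (g a * g a + g a * g a) := by module
    rw [e, this, smul_smul]; norm_num
  have h2 : ∀ a < 2 * m + 1, ∀ b < 2 * m + 1, a ≠ b → g a * g b = -(g b * g a) := by
    intro a ha b hb hab
    have := hγ ⟨a, ha⟩ ⟨b, hb⟩
    rw [if_neg (by simpa using hab), hgγ, hgγ] at this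
    exact eq_neg_of_add_eq_zero_left this
  have h0 : ∀ a, ¬ a < 2 * m + 1 → g a = 0 := by
    intro a ha; rw [hg]; simp only [dif_neg ha]
  have hcomm : ∀ x ∈ Set.range (fun n => g n ⊗ₖ g n), ∀ y ∈ Set.range (fun n => g n ⊗ₖ g n),
      x * y = y * x := by
    rintro _ ⟨a, rfl⟩ _ ⟨b, rfl⟩
    simp only [← Matrix.mul_kronecker_mul]
    by_cases ha : a < 2 * m + 1
    · by_cases hb : b < 2 * m + 1
      · by_cases hab : a = b
        · rw [hab]
        · rw [h2 a ha b hb hab, ← neg_one_smul ℂ, Matrix.smul_kronecker, Matrix.kronecker_smul,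
            smul_smul]
          norm_num
      · rw [h0 b hb]; simp
    · rw [h0 a ha]; simp
  have hpk : ∀ k, ((List.range k).map (fun n => g n ⊗ₖ g n)).prod = czG g k ⊗ₖ czG g k := by
    intro k
    induction k with
    | zero => simp [czG]
    | succ k ih => rw [List.prod_range_succ, czG, Matrix.mul_kronecker_mul, ← ih]
  have hcore := cz_core' m (fun n => g n ⊗ₖ g n)
    (fun a b => hcomm _ ⟨a, rfl⟩ _ ⟨b, rfl⟩)
    (fun a ha => by
      rw [← Matrix.mul_kronecker_mul, h1 a ha, Matrix.one_kronecker_one])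
    (by rw [hpk, cz_kron m g h1 h2])
  have hz' : z = (1/2 : ℂ) • ∑ a ∈ Finset.range (2 * m + 1), g a ⊗ₖ g a := by
    rw [hz, Finset.sum_range]
    simp only [hgγ]
  rw [hz']
  have hl : ∀ l : List ℕ, (do let a ← l; pure (a : ℂ)) = l.map (fun n : ℕ => (n : ℂ)) := by
    intro l
    induction l with
    | nil => rfl
    | cons a l ih => simpa using ih
  rw [hl, List.map_map]
  refine Eq.trans (congrArg List.prod (List.map_congr_left ?_)) hcore
  intro k _
  simp only [Function.comp_apply, Complex.cpow_natCast]
end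

section
/- Let γ^1,…,γ^d be a Clifford family of N×N complex matrices and let z = (1/2)·Σ_{a=1}^d γ^a ⊗ γ^a. Then for every index a: z·(γ^a ⊗ 1 + 1 ⊗ γ^a) = (γ^a ⊗ 1 + 1 ⊗ γ^a)·(1 − z) and z·(γ^a ⊗ 1 − 1 ⊗ γ^a) = (γ^a ⊗ 1 − 1 ⊗ γ^a)·(−1 − z). -/
open Kronecker

/-- Key commutation relation `z·c_± = c_±·(−z ± 1)` for `z = (1/2)·Σ_a γ^a ⊗ γ^a` and
`c_± = γ^a ⊗ 1 ± 1 ⊗ γ^a`, where `γ^1,…,γ^d` is a Clifford family. -/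
theorem clifford_z_cpm_commutation {d N : ℕ}
    (γ : Fin d → Matrix (Fin N) (Fin N) ℂ)
    (hγ : ∀ a b, γ a * γ b + γ b * γ a =
      if a = b then (2 : ℂ) • (1 : Matrix (Fin N) (Fin N) ℂ) else 0)
    (z : Matrix (Fin N × Fin N) (Fin N × Fin N) ℂ)
    (hz : z = (1/2 : ℂ) • ∑ a, γ a ⊗ₖ γ a) :
    ∀ a : Fin d,
      z * (γ a ⊗ₖ (1 : Matrix (Fin N) (Fin N) ℂ) + (1 : Matrix (Fin N) (Fin N) ℂ) ⊗ₖ γ a) =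
        (γ a ⊗ₖ (1 : Matrix (Fin N) (Fin N) ℂ) + (1 : Matrix (Fin N) (Fin N) ℂ) ⊗ₖ γ a) *
          ((1 : Matrix (Fin N × Fin N) (Fin N × Fin N) ℂ) - z) ∧
      z * (γ a ⊗ₖ (1 : Matrix (Fin N) (Fin N) ℂ) - (1 : Matrix (Fin N) (Fin N) ℂ) ⊗ₖ γ a) =
        (γ a ⊗ₖ (1 : Matrix (Fin N) (Fin N) ℂ) - (1 : Matrix (Fin N) (Fin N) ℂ) ⊗ₖ γ a) *
          (-(1 : Matrix (Fin N × Fin N) (Fin N × Fin N) ℂ) - z) := by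
  intro a
  have h1 : z * (γ a ⊗ₖ (1 : Matrix (Fin N) (Fin N) ℂ)) +
      (γ a ⊗ₖ (1 : Matrix (Fin N) (Fin N) ℂ)) * z = (1 : Matrix (Fin N) (Fin N) ℂ) ⊗ₖ γ a := by
    rw [hz, smul_mul_assoc, mul_smul_comm, ← smul_add, Finset.sum_mul, Finset.mul_sum,
      ← Finset.sum_add_distrib, Finset.sum_eq_single a]
    · rw [← Matrix.mul_kronecker_mul, ← Matrix.mul_kronecker_mul, mul_one, one_mul,
        ← Matrix.add_kronecker, hγ, if_pos rfl, Matrix.smul_kronecker, smul_smul]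
      norm_num
    · intro b _ hb
      rw [← Matrix.mul_kronecker_mul, ← Matrix.mul_kronecker_mul, mul_one, one_mul,
        ← Matrix.add_kronecker, hγ, if_neg hb, Matrix.zero_kronecker]
    · simp
  have h2 : z * ((1 : Matrix (Fin N) (Fin N) ℂ) ⊗ₖ γ a) +
      ((1 : Matrix (Fin N) (Fin N) ℂ) ⊗ₖ γ a) * z = γ a ⊗ₖ (1 : Matrix (Fin N) (Fin N) ℂ) := by
    rw [hz, smul_mul_assoc, mul_smul_comm, ← smul_add, Finset.sum_mul, Finset.mul_sum,
      ← Finset.sum_add_distrib, Finset.sum_eq_single a]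
    · rw [← Matrix.mul_kronecker_mul, ← Matrix.mul_kronecker_mul, mul_one, one_mul,
        ← Matrix.kronecker_add, hγ, if_pos rfl, Matrix.kronecker_smul, smul_smul]
      norm_num
    · intro b _ hb
      rw [← Matrix.mul_kronecker_mul, ← Matrix.mul_kronecker_mul, mul_one, one_mul,
        ← Matrix.kronecker_add, hγ, if_neg hb, Matrix.kronecker_zero]
    · simp
  generalize γ a ⊗ₖ (1 : Matrix (Fin N) (Fin N) ℂ) = x at *
  generalize (1 : Matrix (Fin N) (Fin N) ℂ) ⊗ₖ γ a = y at *
  rw [← eq_sub_iff_add_eq] at h1 h2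
  constructor
  · rw [mul_add, h1, h2]
    noncomm_ring
  · rw [mul_sub, h1, h2]
    noncomm_ring
end

section
/- Let γ^1,…,γ^n be a Clifford family of N×N complex matrices, set γ^{ab} := (1/2)(γ^a γ^b − γ^b γ^a), define the spinor L-operator L^{ab}(u) := u·δ^{ab}·1_N − (1/2)·γ^{ab}, and put β := (n−2)/2. Then the inversion relation Σ_{b=1}^n L^{ab}(u + β + 1/2) · L^{bc}(−u − 1/2) = −u(u + β + 1)·δ^{ac}·1_N holds for all complex u and all indices a,c. -/
/-- Inversion relation for the spinor L-operator of `so(n)`: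
`Σ_b L^{ab}(u+β+1/2) · L^{bc}(−u−1/2) = −u(u+β+1)·δ^{ac}·1`, where
`L^{ab}(u) = u·δ^{ab}·1 − (1/2)·γ^{ab}`, `γ^{ab} = (1/2)(γ^aγ^b − γ^bγ^a)` and
`β = (n−2)/2`. -/
theorem spinor_L_inversion {n N : ℕ}
    (γ : Fin n → Matrix (Fin N) (Fin N) ℂ)
    (hγ : ∀ a b, γ a * γ b + γ b * γ a =
      if a = b then (2 : ℂ) • (1 : Matrix (Fin N) (Fin N) ℂ) else 0)
    (L : ℂ → Fin n → Fin n → Matrix (Fin N) (Fin N) ℂ)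
    (hL : ∀ u a b, L u a b =
      (u * (if a = b then (1 : ℂ) else 0)) • (1 : Matrix (Fin N) (Fin N) ℂ) -
        (1/2 : ℂ) • ((1/2 : ℂ) • (γ a * γ b - γ b * γ a)))
    (β : ℂ) (hβ : β = ((n : ℂ) - 2) / 2) :
    ∀ (u : ℂ) (a c : Fin n),
      ∑ b, L (u + β + 1/2) a b * L (-u - 1/2) b c =
        (-(u * (u + β + 1)) * (if a = c then (1 : ℂ) else 0)) •
          (1 : Matrix (Fin N) (Fin N) ℂ) := by
  intro u a c
  have hsq : ∀ b, γ b * γ b = 1 := by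
    intro b
    have h := hγ b b
    rw [if_pos rfl, ← two_smul ℂ] at h
    exact smul_right_injective _ (two_ne_zero' ℂ) h
  have hL' : ∀ v a b, L v a b =
      (if a = b then (v + 1/2) • (1 : Matrix (Fin N) (Fin N) ℂ) else 0) -
        (1/2 : ℂ) • (γ a * γ b) := by
    intro v a b
    have h := hγ a b
    rw [hL]
    by_cases hab : a = b
    · subst hab
      simp only [if_true, hsq]
      module
    · rw [if_neg hab] at h ⊢
      rw [if_neg hab, eq_neg_of_add_eq_zero_right h]
      module
  have key : ∀ b, (γ a * γ b) * (γ b * γ c) = γ a * γ c := by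
    intro b
    rw [mul_assoc, ← mul_assoc (γ b), hsq, one_mul]
  simp only [hL', sub_mul, mul_sub, smul_sub, smul_ite, smul_zero, Finset.sum_sub_distrib, ite_mul, mul_ite, zero_mul, mul_zero,
    smul_mul_assoc, mul_smul_comm, one_mul, mul_one, key, Finset.sum_ite_eq, Finset.sum_ite_eq',
    Finset.mem_univ, if_true, Finset.sum_const, Finset.card_univ, Fintype.card_fin]
  rw [← Nat.cast_smul_eq_nsmul ℂ, show (n : ℂ) = 2 * β + 2 by rw [hβ]; ring]
  by_cases hac : a = c
  · simp only [hac, if_true]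
    module
  · simp only [hac, if_false]
    module
end

section
/- Let γ^1,…,γ^n be a Clifford family of N×N complex matrices, γ^{ab} := (1/2)(γ^a γ^b − γ^b γ^a), L^{ab}(u) := u·δ^{ab}·1_N − (1/2)·γ^{ab}, and β := (n−2)/2. Then the fusion identity Σ_{c=1}^n L^{a c}(u + β − 1/2) · γ^{b_0} · L^{c b}(−1/2 − u) = −( u(u+β)·δ^{ab}·γ^{b_0} + (u+β)·δ^{a b_0}·γ^{b} − u·δ^{b_0 b}·γ^{a} ) holds for all complex u and all indices a, b, b_0 ∈ {1,…,n}; i.e. the fusion of two spinor L-operators reproduces the fundamental orthogonal R-matrix contracted with a gamma matrix. -/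
/-- Fusion identity: the fusion of two spinor L-operators reproduces the fundamental
orthogonal R-matrix contracted with a gamma matrix:
`Σ_c L^{ac}(u+β−1/2)·γ^{b₀}·L^{cb}(−1/2−u)
  = −( u(u+β)·δ^{ab}·γ^{b₀} + (u+β)·δ^{a b₀}·γ^{b} − u·δ^{b₀ b}·γ^{a} )`. -/
theorem spinor_L_fusion {n N : ℕ}
    (γ : Fin n → Matrix (Fin N) (Fin N) ℂ)
    (hγ : ∀ a b, γ a * γ b + γ b * γ a =
      if a = b then (2 : ℂ) • (1 : Matrix (Fin N) (Fin N) ℂ) else 0)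
    (L : ℂ → Fin n → Fin n → Matrix (Fin N) (Fin N) ℂ)
    (hL : ∀ u a b, L u a b =
      (u * (if a = b then (1 : ℂ) else 0)) • (1 : Matrix (Fin N) (Fin N) ℂ) -
        (1/2 : ℂ) • ((1/2 : ℂ) • (γ a * γ b - γ b * γ a)))
    (β : ℂ) (hβ : β = ((n : ℂ) - 2) / 2) :
    ∀ (u : ℂ) (a b b₀ : Fin n),
      ∑ c, L (u + β - 1/2) a c * γ b₀ * L (-1/2 - u) c b =
        -((u * (u + β) * (if a = b then (1 : ℂ) else 0)) • γ b₀ +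
          ((u + β) * (if a = b₀ then (1 : ℂ) else 0)) • γ b -
          (u * (if b₀ = b then (1 : ℂ) else 0)) • γ a) := by
  intro u a b b₀
  have hd : ∀ a b, γ a * γ b + γ b * γ a =
      (2 * (if a = b then (1 : ℂ) else 0)) • (1 : Matrix (Fin N) (Fin N) ℂ) := by
    intro a b
    rw [hγ]
    split_ifs <;> simp
  have hL2 : ∀ v a b, L v a b =
      ((v + 1/2) * (if a = b then (1 : ℂ) else 0)) • (1 : Matrix (Fin N) (Fin N) ℂ) -
        (1/2 : ℂ) • (γ a * γ b) := by
    intro v a b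
    have h : γ b * γ a = _ := eq_sub_of_add_eq' (hd a b)
    rw [hL, h]
    module
  have hsq : ∀ c, γ c * γ c = 1 := by
    intro c
    have h := hd c c
    have h2 : γ c * γ c = (1/2 : ℂ) • (γ c * γ c + γ c * γ c) := by module
    rw [h2, h]
    simp
  have hS : ∑ c, γ c * γ b₀ * γ c = (-2 * β) • γ b₀ := by
    have h1 : ∀ c, γ c * γ b₀ * γ c =
        (2 * (if c = b₀ then (1 : ℂ) else 0)) • γ c - γ b₀ := by
      intro c
      have h : γ c * γ b₀ = _ := eq_sub_of_add_eq (hd c b₀)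
      rw [h, sub_mul, mul_assoc, hsq, mul_one, smul_mul_assoc, one_mul]
    simp only [h1, Finset.sum_sub_distrib, mul_ite, mul_one, mul_zero, ite_smul, zero_smul,
      Finset.sum_ite_eq', Finset.sum_ite_eq, Finset.mem_univ, if_true, Finset.sum_const, Finset.card_univ,
      Fintype.card_fin]
    rw [hβ, ← Nat.cast_smul_eq_nsmul ℂ]
    module
  have hterm : ∀ c, L (u + β - 1/2) a c * γ b₀ * L (-1/2 - u) c b =
      (if a = c then (-(u * (u + β) * (if c = b then (1 : ℂ) else 0))) • γ b₀
          - ((u + β) / 2) • (γ b₀ * (γ c * γ b)) else 0)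
      + (if c = b then (u / 2) • (γ a * γ c * γ b₀) else 0)
      + (1/4 : ℂ) • (γ a * (γ c * γ b₀ * γ c) * γ b) := by
    intro c
    rw [hL2, hL2]
    simp only [sub_mul, mul_sub, smul_mul_assoc, mul_smul_comm, one_mul, mul_one, mul_assoc]
    split_ifs <;> module
  simp only [hterm, Finset.sum_add_distrib, Finset.sum_ite_eq', Finset.sum_ite_eq,
    Finset.mem_univ, if_true]
  rw [← Finset.smul_sum, ← Finset.sum_mul, ← Finset.mul_sum, hS]
  have h1 : γ b₀ * (γ a * γ b) =
      (2 * (if a = b₀ then (1 : ℂ) else 0)) • γ b - γ a * γ b₀ * γ b := by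
    rw [← mul_assoc, eq_sub_of_add_eq' (hd a b₀), sub_mul, smul_mul_assoc, one_mul]
  have h2 : γ a * γ b * γ b₀ =
      (2 * (if b₀ = b then (1 : ℂ) else 0)) • γ a - γ a * γ b₀ * γ b := by
    rw [mul_assoc, eq_sub_of_add_eq' (hd b₀ b), mul_sub, ← mul_assoc, mul_smul_comm, mul_one]
  rw [h1, h2]
  simp only [smul_mul_assoc, mul_smul_comm]
  module
end

section
/- Let γ^1,…,γ^n be a Clifford family of N×N complex matrices, γ^{ab} := (1/2)(γ^a γ^b − γ^b γ^a), L^{ab}(u) := u·δ^{ab}·1_N − (1/2)·γ^{ab}, β := n/2 − 1, and let R^{a_1 a_2}_{b_1 b_2}(u) := u(u+β)·δ^{a_1}_{b_1}δ^{a_2}_{b_2} + (u+β)·δ^{a_1}_{b_2}δ^{a_2}_{b_1} − u·δ^{a_1 a_2}δ_{b_1 b_2} (complex scalars). Then the RLL Yang–Baxter relation holds for all complex u, v and all indices a_1, a_2, c_1, c_2 ∈ {1,…,n}: Σ_{b_1,b_2} R^{a_1 a_2}_{b_1 b_2}(u) · L^{b_1 c_1}(u+v) · L^{b_2 c_2}(v)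 = Σ_{b_1,b_2} L^{a_2 b_2}(v) · L^{a_1 b_1}(u+v) · R^{b_1 b_2}_{c_1 c_2}(u), where the products are products of N×N matrices. -/
/-- After all index sums are collapsed, the RLL relation is an identity for four
anticommuting-up-to-scalars elements of an algebra. -/
theorem rll_core {M : Type*} [Ring M] [Algebra ℂ M] (A B C D : M)
    (ab ac ad bc bd cd u p q β : ℂ) (hpq : p = u + q)
    (hba : B * A = (2 * ab) • (1 : M) - A * B)
    (hca : C * A = (2 * ac) • (1 : M) - A * C)
    (hda : D * A = (2 * ad) • (1 : M) - A * D)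
    (hcb : C * B = (2 * bc) • (1 : M) - B * C)
    (hdb : D * B = (2 * bd) • (1 : M) - B * D)
    (hdc : D * C = (2 * cd) • (1 : M) - C * D) :
    (u * (u + β)) • (((p * ac) • (1 : M) - (1/2 : ℂ) • (A * C)) *
        ((q * bd) • (1 : M) - (1/2 : ℂ) • (B * D))) +
      (u + β) • (((p * bc) • (1 : M) - (1/2 : ℂ) • (B * C)) *
        ((q * ad) • (1 : M) - (1/2 : ℂ) • (A * D))) -
      (u * ab) • ((p * q * cd) • (1 : M) - (p / 2) • (C * D) - (q / 2) • (D * C)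
        - (β / 2) • (C * D)) =
    (u * (u + β)) • (((q * bd) • (1 : M) - (1/2 : ℂ) • (B * D)) *
        ((p * ac) • (1 : M) - (1/2 : ℂ) • (A * C))) +
      (u + β) • (((q * bc) • (1 : M) - (1/2 : ℂ) • (B * C)) *
        ((p * ad) • (1 : M) - (1/2 : ℂ) • (A * D))) -
      (u * cd) • ((p * q * ab) • (1 : M) - (p / 2) • (B * A) - (q / 2) • (A * B)
        - (β / 2) • (B * A)) := by
  have assoc : ∀ {X Y : M} {d : ℂ}, Y * X = (2 * d) • (1 : M) - X * Y →
      ∀ z, Y * (X * z) = (2 * d) • z - X * (Y * z) := by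
    intro X Y d h z
    rw [← mul_assoc, h, sub_mul, smul_mul_assoc, one_mul, mul_assoc]
  have hba' := assoc hba
  have hca' := assoc hca
  have hda' := assoc hda
  have hcb' := assoc hcb
  have hdb' := assoc hdb
  have hdc' := assoc hdc
  subst hpq
  simp only [sub_mul, mul_sub, smul_mul_assoc, mul_smul_comm, one_mul, mul_one, mul_assoc,
    hba, hca, hda, hcb, hdb, hdc, hba', hca', hda', hcb', hdb', hdc']
  module

/-- `Σ_b γ^b X γ^b` for `X = γ^c`. -/
theorem gamma_contract {n : ℕ} {M : Type*} [Ring M] [Algebra ℂ M] (γ : Fin n → M)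
    (h : ∀ a b, γ b * γ a = (2 * (if a = b then (1 : ℂ) else 0)) • (1 : M) - γ a * γ b)
    (c : Fin n) : ∑ b, γ b * (γ c * γ b) = (2 - (n : ℂ)) • γ c := by
  have hsq : ∀ b, γ b * γ b = 1 := by
    intro b
    have h1 := h b b
    rw [if_pos rfl, eq_sub_iff_add_eq, mul_one, ← two_smul ℂ (γ b * γ b)] at h1
    exact smul_right_injective M (two_ne_zero (α := ℂ)) h1
  have : ∀ b, γ b * (γ c * γ b) = (if b = c then (2 : ℂ) • γ b else 0) - γ c := by
    intro b
    rw [h b c, mul_sub, ← mul_assoc (γ b) (γ b), hsq, one_mul]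
    split_ifs <;> simp
  simp only [this, Finset.sum_sub_distrib, Finset.sum_ite_eq', Finset.mem_univ, if_true,
    Finset.sum_const, Finset.card_univ, Fintype.card_fin]
  rw [← Nat.cast_smul_eq_nsmul ℂ]
  module



/-- The RLL Yang–Baxter relation for the spinor L-operator of `so(n)` with the
fundamental orthogonal R-matrix
`R^{a₁a₂}_{b₁b₂}(u) = u(u+β)·δ^{a₁}_{b₁}δ^{a₂}_{b₂} + (u+β)·δ^{a₁}_{b₂}δ^{a₂}_{b₁}
 − u·δ^{a₁a₂}δ_{b₁b₂}`, `β = n/2 − 1`: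
`Σ R^{a₁a₂}_{b₁b₂}(u) L^{b₁c₁}(u+v) L^{b₂c₂}(v) = Σ L^{a₂b₂}(v) L^{a₁b₁}(u+v) R^{b₁b₂}_{c₁c₂}(u)`. -/
theorem spinor_RLL_YangBaxter {n N : ℕ}
    (γ : Fin n → Matrix (Fin N) (Fin N) ℂ)
    (hγ : ∀ a b, γ a * γ b + γ b * γ a =
      if a = b then (2 : ℂ) • (1 : Matrix (Fin N) (Fin N) ℂ) else 0)
    (L : ℂ → Fin n → Fin n → Matrix (Fin N) (Fin N) ℂ)
    (hL : ∀ u a b, L u a b =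
      (u * (if a = b then (1 : ℂ) else 0)) • (1 : Matrix (Fin N) (Fin N) ℂ) -
        (1/2 : ℂ) • ((1/2 : ℂ) • (γ a * γ b - γ b * γ a)))
    (β : ℂ) (hβ : β = (n : ℂ) / 2 - 1)
    (R : ℂ → Fin n → Fin n → Fin n → Fin n → ℂ)
    (hR : ∀ u a₁ a₂ b₁ b₂, R u a₁ a₂ b₁ b₂ =
      u * (u + β) * (if a₁ = b₁ then (1 : ℂ) else 0) * (if a₂ = b₂ then (1 : ℂ) else 0) +
      (u + β) * (if a₁ = b₂ then (1 : ℂ) else 0) * (if a₂ = b₁ then (1 : ℂ) else 0) -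
      u * (if a₁ = a₂ then (1 : ℂ) else 0) * (if b₁ = b₂ then (1 : ℂ) else 0)) :
    ∀ (u v : ℂ) (a₁ a₂ c₁ c₂ : Fin n),
      ∑ b₁, ∑ b₂, R u a₁ a₂ b₁ b₂ • (L (u + v) b₁ c₁ * L v b₂ c₂) =
        ∑ b₁, ∑ b₂, R u b₁ b₂ c₁ c₂ • (L v a₂ b₂ * L (u + v) a₁ b₁) := by

  intro u v a₁ a₂ c₁ c₂
  have h : ∀ a b, γ b * γ a = (2 * (if a = b then (1 : ℂ) else 0)) •
      (1 : Matrix (Fin N) (Fin N) ℂ) - γ a * γ b := by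
    intro a b
    rw [eq_sub_iff_add_eq, add_comm, hγ a b]
    split_ifs <;> simp
  have hL' : ∀ w a b, L w a b = ((w + 1/2) * (if a = b then (1 : ℂ) else 0)) •
      (1 : Matrix (Fin N) (Fin N) ℂ) - (1/2 : ℂ) • (γ a * γ b) := by
    intro w a b
    rw [hL, h a b]
    module
  have hcon := gamma_contract γ h
  have hLL : ∀ w z c d, ∑ b, L w b c * L z b d =
      ((w + 1/2) * (z + 1/2) * (if c = d then (1 : ℂ) else 0)) •
        (1 : Matrix (Fin N) (Fin N) ℂ) - ((w + 1/2) / 2) • (γ c * γ d)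
        - ((z + 1/2) / 2) • (γ d * γ c) - (β / 2) • (γ c * γ d) := by
    intro w z c d
    have h4 : ∑ b, γ b * (γ c * (γ b * γ d)) = (2 - (n : ℂ)) • (γ c * γ d) := by
      rw [← smul_mul_assoc, ← hcon c, Finset.sum_mul]
      simp only [mul_assoc]
    have h5 : ∀ b, L w b c * L z b d =
        (if b = c then ((w + 1/2) * (z + 1/2) * (if b = d then (1 : ℂ) else 0)) •
          (1 : Matrix (Fin N) (Fin N) ℂ) - ((w + 1/2) / 2) • (γ b * γ d) else 0)
        - (if b = d then ((z + 1/2) / 2) • (γ b * γ c) else 0)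
        + (1/4 : ℂ) • (γ b * (γ c * (γ b * γ d))) := by
      intro b
      simp only [hL', sub_mul, mul_sub, smul_mul_assoc, mul_smul_comm, one_mul, mul_one, mul_assoc]
      split_ifs <;> module
    simp only [h5, Finset.sum_add_distrib, Finset.sum_sub_distrib, Finset.sum_ite_eq',
      Finset.mem_univ, if_true, ← Finset.smul_sum, h4, hβ]
    module
  have hRR : ∀ w z c d, ∑ b, L w c b * L z d b =
      ((z + 1/2) * (w + 1/2) * (if d = c then (1 : ℂ) else 0)) •
        (1 : Matrix (Fin N) (Fin N) ℂ) - ((z + 1/2) / 2) • (γ c * γ d)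
        - ((w + 1/2) / 2) • (γ d * γ c) - (β / 2) • (γ c * γ d) := by
    intro w z c d
    have h4 : ∑ b, γ c * (γ b * (γ d * γ b)) = (2 - (n : ℂ)) • (γ c * γ d) := by
      rw [← mul_smul_comm, ← hcon d, Finset.mul_sum]
    have h5 : ∀ b, L w c b * L z d b =
        (if c = b then ((z + 1/2) * (w + 1/2) * (if d = b then (1 : ℂ) else 0)) •
          (1 : Matrix (Fin N) (Fin N) ℂ) - ((w + 1/2) / 2) • (γ d * γ b) else 0)
        - (if d = b then ((z + 1/2) / 2) • (γ c * γ b) else 0)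
        + (1/4 : ℂ) • (γ c * (γ b * (γ d * γ b))) := by
      intro b
      simp only [hL', sub_mul, mul_sub, smul_mul_assoc, mul_smul_comm, one_mul, mul_one, mul_assoc]
      split_ifs <;> module
    simp only [h5, Finset.sum_add_distrib, Finset.sum_sub_distrib, Finset.sum_ite_eq,
      Finset.mem_univ, if_true, ← Finset.smul_sum, h4, hβ]
    module
  have e1 : ∀ F : Fin n → Fin n → Matrix (Fin N) (Fin N) ℂ,
      ∑ b₁, ∑ b₂, R u a₁ a₂ b₁ b₂ • F b₁ b₂ =
      (u * (u + β)) • F a₁ a₂ + (u + β) • F a₂ a₁ -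
        (u * (if a₁ = a₂ then (1 : ℂ) else 0)) • ∑ b, F b b := by
    intro F
    simp [hR, sub_smul, add_smul, Finset.sum_add_distrib, Finset.sum_sub_distrib, ite_smul,
      Finset.smul_sum]
  have e2 : ∀ F : Fin n → Fin n → Matrix (Fin N) (Fin N) ℂ,
      ∑ b₁, ∑ b₂, R u b₁ b₂ c₁ c₂ • F b₁ b₂ =
      (u * (u + β)) • F c₁ c₂ + (u + β) • F c₂ c₁ -
        (u * (if c₁ = c₂ then (1 : ℂ) else 0)) • ∑ b, F b b := by
    intro F
    simp [hR, sub_smul, add_smul, Finset.sum_add_distrib, Finset.sum_sub_distrib, ite_smul,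
      Finset.smul_sum]
  rw [e1 fun b₁ b₂ => L (u + v) b₁ c₁ * L v b₂ c₂,
    e2 fun b₁ b₂ => L v a₂ b₂ * L (u + v) a₁ b₁]
  simp only [hLL, hRR]
  simp only [hL']
  exact rll_core (γ a₁) (γ a₂) (γ c₁) (γ c₂) _ _ _ _ _ _ u (u + v + 1/2) (v + 1/2) β (by ring)
    (h _ _) (h _ _) (h _ _) (h _ _) (h _ _) (h _ _)
end

section
/- Let n ≥ 2, V = ℂ^n, P the flip operator on V ⊗ V, and K the operator on V ⊗ V with matrix entries K^{a_1 a_2}_{b_1 b_2} = δ^{a_1 a_2}·δ_{b_1 b_2}. Set κ := n/2 − 1 and define R(u) := u(u+κ)·1 + (u+κ)·P − u·K. Then R satisfies the Yang–Baxter equation: for all complex u, v, R_{12}(u−v) · R_{13}(u) · R_{23}(v) = R_{23}(v) · R_{13}(u) · R_{12}(u−v) on V ⊗ V ⊗ V, where R_{ij}(u) acts as R(u) on the i-th and j-th tensor factors and as the identity on the third. -/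
/-- The flip (permutation) operator on `ℂ^n ⊗ ℂ^n`, `P(x⊗y) = y⊗x`. -/
def flipOp (n : ℕ) : Matrix (Fin n × Fin n) (Fin n × Fin n) ℂ :=
  Matrix.of fun p q => if p.1 = q.2 ∧ p.2 = q.1 then 1 else 0

/-- The operator `K` on `ℂ^n ⊗ ℂ^n` with entries `K^{a₁a₂}_{b₁b₂} = δ^{a₁a₂}·δ_{b₁b₂}`. -/
def trOp (n : ℕ) : Matrix (Fin n × Fin n) (Fin n × Fin n) ℂ :=
  Matrix.of fun p q => if p.1 = p.2 ∧ q.1 = q.2 then 1 else 0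

/-- The fundamental (vector) R-matrix with `so(n)` symmetry:
`R(u) = u(u+κ)·1 + (u+κ)·P − u·K`, `κ = n/2 − 1`. -/
noncomputable def soR (n : ℕ) (u : ℂ) : Matrix (Fin n × Fin n) (Fin n × Fin n) ℂ :=
  (u * (u + ((n : ℂ) / 2 - 1))) • (1 : Matrix (Fin n × Fin n) (Fin n × Fin n) ℂ) +
    (u + ((n : ℂ) / 2 - 1)) • flipOp n - u • trOp n

/-- `R₁₂(u)` on `ℂ^n ⊗ ℂ^n ⊗ ℂ^n`. -/
noncomputable def soR12 (n : ℕ) (u : ℂ) :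
    Matrix (Fin n × Fin n × Fin n) (Fin n × Fin n × Fin n) ℂ :=
  Matrix.of fun p q =>
    soR n u (p.1, p.2.1) (q.1, q.2.1) * (if p.2.2 = q.2.2 then 1 else 0)

/-- `R₁₃(u)` on `ℂ^n ⊗ ℂ^n ⊗ ℂ^n`. -/
noncomputable def soR13 (n : ℕ) (u : ℂ) :
    Matrix (Fin n × Fin n × Fin n) (Fin n × Fin n × Fin n) ℂ :=
  Matrix.of fun p q =>
    soR n u (p.1, p.2.2) (q.1, q.2.2) * (if p.2.1 = q.2.1 then 1 else 0)

/-- `R₂₃(u)` on `ℂ^n ⊗ ℂ^n ⊗ ℂ^n`. -/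
noncomputable def soR23 (n : ℕ) (u : ℂ) :
    Matrix (Fin n × Fin n × Fin n) (Fin n × Fin n × Fin n) ℂ :=
  Matrix.of fun p q =>
    soR n u (p.2.1, p.2.2) (q.2.1, q.2.2) * (if p.1 = q.1 then 1 else 0)

lemma soR12_mulVec (n : ℕ) (u : ℂ) (f : Fin n × Fin n × Fin n → ℂ) (a b c : Fin n) :
    (soR12 n u).mulVec f (a, b, c) = (u * (u + ((n : ℂ) / 2 - 1))) * f (a, b, c)
      + (u + ((n : ℂ) / 2 - 1)) * f (b, a, c)
      - u * (if a = b then ∑ i, f (i, i, c) else 0) := by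
  simp [soR12, soR, flipOp, trOp, Matrix.mulVec, dotProduct, Fintype.sum_prod_type,
    Matrix.one_apply, add_mul, sub_mul, Finset.sum_add_distrib, Finset.sum_sub_distrib, ite_and,
    Finset.sum_ite_eq, mul_assoc, ← Finset.mul_sum]

lemma soR13_mulVec (n : ℕ) (u : ℂ) (f : Fin n × Fin n × Fin n → ℂ) (a b c : Fin n) :
    (soR13 n u).mulVec f (a, b, c) = (u * (u + ((n : ℂ) / 2 - 1))) * f (a, b, c)
      + (u + ((n : ℂ) / 2 - 1)) * f (c, b, a)
      - u * (if a = c then ∑ i, f (i, b, i) else 0) := by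
  simp [soR13, soR, flipOp, trOp, Matrix.mulVec, dotProduct, Fintype.sum_prod_type,
    Matrix.one_apply, add_mul, sub_mul, Finset.sum_add_distrib, Finset.sum_sub_distrib, ite_and,
    Finset.sum_ite_eq, mul_assoc, ← Finset.mul_sum]

lemma soR23_mulVec (n : ℕ) (u : ℂ) (f : Fin n × Fin n × Fin n → ℂ) (a b c : Fin n) :
    (soR23 n u).mulVec f (a, b, c) = (u * (u + ((n : ℂ) / 2 - 1))) * f (a, b, c)
      + (u + ((n : ℂ) / 2 - 1)) * f (a, c, b)
      - u * (if b = c then ∑ i, f (a, i, i) else 0) := by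
  simp [soR23, soR, flipOp, trOp, Matrix.mulVec, dotProduct, Fintype.sum_prod_type,
    Matrix.one_apply, add_mul, sub_mul, Finset.sum_add_distrib, Finset.sum_sub_distrib, ite_and,
    Finset.sum_ite_eq, mul_assoc, ← Finset.mul_sum]

/-- The fundamental `so(n)` R-matrix satisfies the Yang–Baxter equation. -/
theorem so_R_YangBaxter (n : ℕ) (hn : 2 ≤ n) (u v : ℂ) :
    soR12 n (u - v) * soR13 n u * soR23 n v =
      soR23 n v * soR13 n u * soR12 n (u - v) := by
  apply Matrix.toLin'.injective
  apply LinearMap.ext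
  intro f
  simp only [Matrix.toLin'_apply, ← Matrix.mulVec_mulVec]
  funext ⟨a, b, c⟩
  simp only [soR12_mulVec, soR13_mulVec, soR23_mulVec, Finset.sum_add_distrib,
    Finset.sum_sub_distrib, ← Finset.mul_sum, Finset.sum_ite_eq, Finset.sum_ite_eq',
    Finset.mem_univ, if_true, Finset.sum_const, Finset.card_univ, Fintype.card_fin, nsmul_eq_mul]
  by_cases hab : a = b
  · subst hab
    by_cases hac : a = c
    · subst hac
      simp
      ring
    · have hca : ¬ c = a := fun h => hac h.symm
      simp [hac, hca]
      ring
  · have hba : ¬ b = a := fun h => hab h.symm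
    by_cases hac : a = c
    · subst hac
      simp [hab, hba]
      ring
    · have hca : ¬ c = a := fun h => hac h.symm
      by_cases hbc : b = c
      · subst hbc
        simp [hab, hba]
        ring
      · have hcb : ¬ c = b := fun h => hbc h.symm
        simp [hab, hba, hac, hca, hbc, hcb]
        ring
end

section
/- Let m ≥ 1, d = 2m, N = 2^m, and let γ^1,…,γ^{2m} be a Clifford family of N×N complex matrices. For a subset A ⊆ {1,…,2m} let γ^A denote the product of the γ^a for a ∈ A taken in increasing order of the index (γ^∅ = 1_N). Then the flip operator S on ℂ^N ⊗ ℂ^N (S(x⊗y) = y⊗x) is given by the Fierz-type expansion S = 2^{−m} · Σ_{A ⊆ {1,…,2m}} (−1)^{|A|(|A|−1)/2} · γ^A ⊗ γ^A. -/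
open Kronecker

/-- Moving a generator past an ordered product. -/
lemma clifford_comm_list {n m : ℕ} (γ : Fin n → Matrix (Fin m) (Fin m) ℂ)
    (hac : ∀ a b, a ≠ b → γ a * γ b = - (γ b * γ a)) (c : Fin n) (l : List (Fin n))
    (hl : l.Nodup) :
    γ c * (l.map γ).prod =
      ((-1 : ℂ) ^ (l.length + if c ∈ l then 1 else 0)) • ((l.map γ).prod * γ c) := by
  induction l with
  | nil => simp
  | cons a l ih =>
    rw [List.nodup_cons] at hl
    have ih := ih hl.2
    rw [List.map_cons, List.prod_cons]
    by_cases hca : c = a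
    · subst hca
      rw [if_neg hl.1] at ih
      conv_lhs => rw [ih]
      simp only [List.length_cons, List.mem_cons, true_or, if_true, mul_smul_comm, ← mul_assoc]
      congr 1
      ring
    · rw [← mul_assoc, hac c a hca, neg_mul, mul_assoc, ih]
      simp only [List.length_cons, List.mem_cons, hca, false_or, mul_smul_comm, ← mul_assoc]
      rw [← neg_smul]
      congr 1
      ring

lemma clifford_sq_list {n m : ℕ} (γ : Fin n → Matrix (Fin m) (Fin m) ℂ)
    (hac : ∀ a b, a ≠ b → γ a * γ b = - (γ b * γ a)) (hsq : ∀ a, γ a * γ a = 1)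
    (l : List (Fin n)) (hl : l.Nodup) :
    (l.map γ).prod * (l.map γ).prod = ((-1 : ℂ) ^ (l.length * (l.length - 1) / 2)) • 1 := by
  induction l with
  | nil => simp
  | cons a l ih =>
    rw [List.nodup_cons] at hl
    have ih := ih hl.2
    have h := clifford_comm_list γ hac a l hl.2
    rw [if_neg hl.1, add_zero] at h
    have h2 : (l.map γ).prod * γ a = ((-1 : ℂ) ^ l.length) • (γ a * (l.map γ).prod) := by
      rw [h, smul_smul, ← pow_add, Even.neg_one_pow ⟨_, rfl⟩, one_smul]
    rw [List.map_cons, List.prod_cons]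
    have e : (l.length + 1) * (l.length + 1 - 1) / 2
        = l.length + l.length * (l.length - 1) / 2 := by
      rw [Nat.triangle_succ, Nat.add_comm]
    calc γ a * (l.map γ).prod * (γ a * (l.map γ).prod)
        = γ a * ((l.map γ).prod * γ a) * (l.map γ).prod := by simp only [mul_assoc]
      _ = ((-1 : ℂ) ^ l.length) • ((γ a * γ a) * ((l.map γ).prod * (l.map γ).prod)) := by
          rw [h2]; simp only [mul_smul_comm, smul_mul_assoc, mul_assoc]
      _ = _ := by
          rw [hsq, ih, one_mul, smul_smul, ← pow_add, List.length_cons, e]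

lemma clifford_parity {m : ℕ} (A B : Finset (Fin (2 * m))) (hAB : A ≠ B) :
    ∃ c, Odd ((A.card + if c ∈ A then 1 else 0) + (B.card + if c ∈ B then 1 else 0)) := by
  by_contra! h
  simp only [Nat.not_odd_iff_even] at h
  by_cases hE : Even (A.card + B.card)
  · apply hAB
    ext c
    have := h c
    by_cases h1 : c ∈ A <;> by_cases h2 : c ∈ B <;> simp only [h1, h2, if_true, if_false] at this ⊢ <;> grind
  · have : B = Aᶜ := by
      ext c
      have := h c
      rw [Finset.mem_compl]
      by_cases h1 : c ∈ A <;> by_cases h2 : c ∈ B <;> simp only [h1, h2, if_true, if_false] at this ⊢ <;> grind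
    apply hE
    rw [this, Finset.card_add_card_compl, Fintype.card_fin]
    exact even_two_mul m

lemma clifford_trace {m N : ℕ} (γ : Fin (2 * m) → Matrix (Fin N) (Fin N) ℂ)
    (hac : ∀ a b, a ≠ b → γ a * γ b = - (γ b * γ a)) (hsq : ∀ a, γ a * γ a = 1)
    (A B : Finset (Fin (2 * m))) (hAB : A ≠ B) :
    (((A.sort (· ≤ ·)).map γ).prod * ((B.sort (· ≤ ·)).map γ).prod).trace = 0 := by
  obtain ⟨c, hc⟩ := clifford_parity A B hAB
  have hA := clifford_comm_list γ hac c (A.sort (· ≤ ·)) (A.sort_nodup _)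
  have hB := clifford_comm_list γ hac c (B.sort (· ≤ ·)) (B.sort_nodup _)
  simp only [Finset.length_sort, Finset.mem_sort] at hA hB
  set P := ((A.sort (· ≤ ·)).map γ).prod
  set Q := ((B.sort (· ≤ ·)).map γ).prod
  have h1 : γ c * (P * Q) = - (P * Q * γ c) := by
    rw [← mul_assoc, hA, smul_mul_assoc, mul_assoc, hB, mul_smul_comm, smul_smul, ← pow_add,
      hc.neg_one_pow, neg_one_smul, mul_assoc]
  have h2 : (P * Q).trace = - (P * Q).trace := by
    calc (P * Q).trace = (γ c * (γ c * (P * Q))).trace := by rw [← mul_assoc, hsq, one_mul]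
      _ = - (γ c * (P * Q * γ c)).trace := by rw [h1, mul_neg, Matrix.trace_neg]
      _ = - (P * Q).trace := by rw [Matrix.trace_mul_comm, mul_assoc, hsq, mul_one]
  exact self_eq_neg.mp h2

/-- Fierz-type expansion of the flip operator on the tensor square of the spinor space:
for a Clifford family `γ^1,…,γ^{2m}` of `2^m × 2^m` matrices,
`S = 2^{−m} · Σ_{A ⊆ {1,…,2m}} (−1)^{|A|(|A|−1)/2} · γ^A ⊗ γ^A`,
where `γ^A` is the ordered product of the `γ^a`, `a ∈ A`, and `S(x⊗y) = y⊗x`. -/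
theorem flip_fierz_expansion (m : ℕ) (hm : 1 ≤ m)
    (γ : Fin (2 * m) → Matrix (Fin (2 ^ m)) (Fin (2 ^ m)) ℂ)
    (hγ : ∀ a b, γ a * γ b + γ b * γ a =
      if a = b then (2 : ℂ) • (1 : Matrix (Fin (2 ^ m)) (Fin (2 ^ m)) ℂ) else 0)
    (S : Matrix (Fin (2 ^ m) × Fin (2 ^ m)) (Fin (2 ^ m) × Fin (2 ^ m)) ℂ)
    (hS : ∀ x y : Fin (2 ^ m) → ℂ,
      S.mulVec (fun p => x p.1 * y p.2) = fun p => y p.1 * x p.2) :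
    S = ((2 : ℂ) ^ m)⁻¹ •
      ∑ A : Finset (Fin (2 * m)),
        ((-1 : ℂ) ^ (A.card * (A.card - 1) / 2)) •
          (((A.sort (· ≤ ·)).map γ).prod ⊗ₖ ((A.sort (· ≤ ·)).map γ).prod) := by
  have hsq : ∀ a, γ a * γ a = 1 := by
    intro a
    have h := hγ a a
    rw [if_pos rfl, ← two_smul ℂ] at h
    exact smul_right_injective _ (two_ne_zero (α := ℂ)) h
  have hac : ∀ a b, a ≠ b → γ a * γ b = - (γ b * γ a) := by
    intro a b hab
    have h := hγ a b
    rw [if_neg hab] at h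
    exact eq_neg_of_add_eq_zero_left h
  let P : Finset (Fin (2 * m)) → Matrix (Fin (2 ^ m)) (Fin (2 ^ m)) ℂ :=
    fun A => ((A.sort (· ≤ ·)).map γ).prod
  let s : Finset (Fin (2 * m)) → ℂ := fun A => (-1 : ℂ) ^ (A.card * (A.card - 1) / 2)
  have hss : ∀ A, s A * s A = 1 := fun A => by
    simp only [s]
    rw [← pow_add, Even.neg_one_pow ⟨_, rfl⟩]
  have hPP : ∀ A, P A * P A = s A • 1 := fun A => by
    have := clifford_sq_list γ hac hsq (A.sort (· ≤ ·)) (A.sort_nodup _)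
    rwa [Finset.length_sort] at this
  let G : Matrix (Finset (Fin (2 * m))) (Fin (2 ^ m) × Fin (2 ^ m)) ℂ :=
    Matrix.of fun A p => P A p.1 p.2
  let H : Matrix (Fin (2 ^ m) × Fin (2 ^ m)) (Finset (Fin (2 * m))) ℂ :=
    Matrix.of fun p A => ((2 : ℂ) ^ m)⁻¹ * s A * P A p.2 p.1
  have hGH : G * H = 1 := by
    ext A B
    have h1 : (G * H) A B = ((2 : ℂ) ^ m)⁻¹ * s B * (P A * P B).trace := by
      simp only [Matrix.mul_apply, Matrix.trace, Matrix.diag, G, H, Matrix.of_apply,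
        Fintype.sum_prod_type, Finset.mul_sum]
      refine Finset.sum_congr rfl fun i _ => Finset.sum_congr rfl fun j _ => ?_
      ring
    rw [h1]
    by_cases hAB : A = B
    · subst hAB
      rw [hPP, Matrix.trace_smul, Matrix.trace_one, Matrix.one_apply_eq, Fintype.card_fin,
        smul_eq_mul]
      push_cast
      have h2 : ((2 : ℂ) ^ m) ≠ 0 := pow_ne_zero _ two_ne_zero
      calc _ = (s A * s A) * (((2 : ℂ) ^ m)⁻¹ * 2 ^ m) := by ring
        _ = 1 := by rw [hss, inv_mul_cancel₀ h2, one_mul]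
    · rw [Matrix.one_apply_ne hAB, clifford_trace γ hac hsq A B hAB, mul_zero]
  have hHG : H * G = 1 := by
    refine (Matrix.mul_eq_one_comm_of_card_eq _ _ _ ?_).mp hGH
    simp [pow_add, two_mul]
  ext ⟨i, k⟩ ⟨j, l⟩
  have h1 := congrFun (hS (Pi.single j 1) (Pi.single l 1)) (i, k)
  have h2 : (fun p : Fin (2 ^ m) × Fin (2 ^ m) =>
      (Pi.single j 1 : Fin (2 ^ m) → ℂ) p.1 * (Pi.single l 1 : Fin (2 ^ m) → ℂ) p.2)
      = Pi.single (j, l) 1 := by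
    ext ⟨p, q⟩
    simp only [Pi.single_apply, Prod.mk.injEq]
    by_cases hp : p = j <;> by_cases hq : q = l <;> simp [hp, hq]
  rw [h2, Matrix.mulVec_single_one] at h1
  have h3 := congrFun (congrFun hHG (j, i)) (k, l)
  simp only [Matrix.col_apply] at h1
  rw [h1]
  simp only [Matrix.smul_apply, Matrix.sum_apply, Matrix.kroneckerMap_apply, smul_eq_mul,
    Finset.mul_sum]
  simp only [Matrix.mul_apply, G, H, Matrix.of_apply, Matrix.one_apply, Prod.mk.injEq] at h3
  have h4 : (Pi.single l 1 : Fin (2 ^ m) → ℂ) i * (Pi.single j 1 : Fin (2 ^ m) → ℂ) k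
      = if j = k ∧ i = l then 1 else 0 := by
    simp only [Pi.single_apply]
    by_cases hp : i = l <;> by_cases hq : k = j <;> simp [hp, hq, eq_comm]
  rw [h4, ← h3]
  refine Finset.sum_congr rfl fun A _ => ?_
  simp only [P, s]
  ring
end

section
/- Let γ^1, γ^2, γ^3, γ^4 be 4×4 complex matrices satisfying γ^a γ^b + γ^b γ^a = 2δ^{ab}·1 for all a,b, and let z = (1/2)·Σ_{a=1}^4 γ^a ⊗ γ^a. Then the flip operator S on ℂ⁴ ⊗ ℂ⁴ is the polynomial in z: S = (1/6)·(z⁴ − 2z³ − 7z² + 8z + 6), equivalently S = P_0 + P_1 − P_{−1} − P_2 − P_{−2} in terms of the spectral projectors of z onto its eigenvalues 0, ±1, ±2. -/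
open Kronecker

namespace SoFlip

set_option linter.unusedSimpArgs false
set_option linter.unusedSectionVars false

abbrev M4 := Matrix (Fin 4) (Fin 4) ℂ
abbrev Idx := Fin 4 → Bool

/-- optional factor -/
def opt (γ : Fin 4 → M4) (s : Idx) (i : Fin 4) : M4 := if s i then γ i else 1

/-- the ordered product -/
def gam (γ : Fin 4 → M4) (s : Idx) : M4 :=
  opt γ s 0 * (opt γ s 1 * (opt γ s 2 * opt γ s 3))

/-- the reversed product -/
def gamR (γ : Fin 4 → M4) (s : Idx) : M4 :=
  opt γ s 3 * (opt γ s 2 * (opt γ s 1 * opt γ s 0))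

def sg (c : Fin 4) (s : Idx) (i : Fin 4) : ℤ := if s i = false ∨ i = c then 1 else -1

def eps (c : Fin 4) (s : Idx) : ℤ := sg c s 0 * sg c s 1 * sg c s 2 * sg c s 3

lemma sep : ∀ s t : Idx, s ≠ t → ∃ c, eps c s * eps c t = -1 := by decide

/-- the Clifford relations -/
abbrev Cliff (γ : Fin 4 → M4) : Prop := ∀ a b, γ a * γ b + γ b * γ a =
  if a = b then (2 : ℂ) • (1 : Matrix (Fin 4) (Fin 4) ℂ) else 0

lemma sq {γ : Fin 4 → M4} (hγ : Cliff γ) (a : Fin 4) : γ a * γ a = 1 := by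
  have h := hγ a a
  simp only [if_true, ← two_smul ℂ] at h
  exact smul_right_injective _ (two_ne_zero) h

lemma anti {γ : Fin 4 → M4} (hγ : Cliff γ) {a b : Fin 4} (h : a ≠ b) : γ a * γ b = -(γ b * γ a) := by
  have h1 := hγ a b
  rw [if_neg h] at h1
  exact eq_neg_of_add_eq_zero_left h1

lemma comm_opt {γ : Fin 4 → M4} (hγ : Cliff γ) (c : Fin 4) (s : Idx) (i : Fin 4) :
    γ c * opt γ s i = sg c s i • (opt γ s i * γ c) := by
  unfold opt sg
  by_cases hs : s i = true
  · by_cases hi : i = c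
    · subst hi; simp
    · simp [hs, hi, anti hγ (Ne.symm hi)]
  · simp [hs]

lemma comm_mul {γ : Fin 4 → M4} (_ : Cliff γ) {c : Fin 4} {A B : M4} {m n : ℤ} (hA : γ c * A = m • (A * γ c))
    (hB : γ c * B = n • (B * γ c)) : γ c * (A * B) = (m * n) • (A * B * γ c) := by
  rw [← mul_assoc, hA, smul_mul_assoc, mul_assoc, hB, mul_smul_comm, smul_smul, mul_assoc]

lemma comm_gam {γ : Fin 4 → M4} (hγ : Cliff γ) (c : Fin 4) (s : Idx) : γ c * gam γ s = eps c s • (gam γ s * γ c) := by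
  have h := comm_opt hγ c s
  have := comm_mul hγ (h 0) (comm_mul hγ (h 1) (comm_mul hγ (h 2) (h 3)))
  unfold gam eps
  rw [this]; congr 1; ring

lemma comm_gamR {γ : Fin 4 → M4} (hγ : Cliff γ) (c : Fin 4) (s : Idx) : γ c * gamR γ s = eps c s • (gamR γ s * γ c) := by
  have h := comm_opt hγ c s
  have := comm_mul hγ (h 3) (comm_mul hγ (h 2) (comm_mul hγ (h 1) (h 0)))
  unfold gamR eps
  rw [this]; congr 1; ring

lemma opt_sq {γ : Fin 4 → M4} (hγ : Cliff γ) (s : Idx) (i : Fin 4) : opt γ s i * opt γ s i = 1 := by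
  unfold opt; split_ifs <;> simp [sq hγ]

lemma opt_sq' {γ : Fin 4 → M4} (hγ : Cliff γ) (s : Idx) (i : Fin 4) (w : M4) : opt γ s i * (opt γ s i * w) = w := by
  rw [← mul_assoc, opt_sq hγ, one_mul]

lemma gam_gamR {γ : Fin 4 → M4} (hγ : Cliff γ) (s : Idx) : gam γ s * gamR γ s = 1 := by
  unfold gam gamR
  simp only [mul_assoc, opt_sq' hγ, opt_sq hγ]

lemma trace_zero {γ : Fin 4 → M4} (hγ : Cliff γ) {s t : Idx} (h : s ≠ t) : (gam γ s * gamR γ t).trace = 0 := by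
  obtain ⟨c, hc⟩ := sep s t h
  have h1 := comm_mul hγ (comm_gam hγ c s) (comm_gamR hγ c t)
  rw [hc] at h1
  have h2 : (γ c * (gam γ s * gamR γ t) * γ c).trace = (gam γ s * gamR γ t).trace := by
    rw [Matrix.trace_mul_comm, ← mul_assoc, sq hγ, one_mul]
  rw [h1, smul_mul_assoc, mul_assoc, sq hγ, mul_one] at h2
  simp only [neg_smul, one_smul, Matrix.trace_neg] at h2
  exact self_eq_neg.mp h2.symm

lemma complete {γ : Fin 4 → M4} (hγ : Cliff γ) (k l k' l' : Fin 4) :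
    ∑ s, gamR γ s l k * gam γ s k' l' = if k = k' ∧ l = l' then 4 else 0 := by
  let G : Matrix Idx (Fin 4 × Fin 4) ℂ := Matrix.of fun s p => gam γ s p.1 p.2
  let H : Matrix (Fin 4 × Fin 4) Idx ℂ := Matrix.of fun p s => (1/4) * gamR γ s p.2 p.1
  have hGH : G * H = 1 := by
    ext s t
    have e : (G * H) s t = (1/4) * (gam γ s * gamR γ t).trace := by
      simp only [Matrix.mul_apply, Matrix.of_apply, G, H, Fintype.sum_prod_type, Matrix.trace, Matrix.diag,
        Finset.mul_sum]
      refine Finset.sum_congr rfl fun i _ => Finset.sum_congr rfl fun j _ => by ring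
    rw [e]
    by_cases h : s = t
    · subst h; rw [gam_gamR hγ]; simp
    · rw [trace_zero hγ h]; simp [h]
  have hHG : H * G = 1 := (Matrix.mul_eq_one_comm_of_card_eq _ _ _ (by simp)).mp hGH
  have := congrFun (congrFun hHG (k, l)) (k', l')
  simp only [Matrix.mul_apply, Matrix.of_apply, G, H, mul_assoc, ← Finset.mul_sum, Matrix.one_apply,
    Prod.mk.injEq] at this
  split_ifs at this ⊢ <;> linear_combination 4 * this

lemma sum_kron {γ : Fin 4 → M4} (hγ : Cliff γ) {S : Matrix (Fin 4 × Fin 4) (Fin 4 × Fin 4) ℂ}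
    (hS : ∀ x y : Fin 4 → ℂ,
      S.mulVec (fun p => x p.1 * y p.2) = fun p => y p.1 * x p.2) :
    ∑ s, gam γ s ⊗ₖ gamR γ s = (4 : ℂ) • S := by
  ext ⟨p1, p2⟩ ⟨q1, q2⟩
  have h := congrFun (hS (Pi.single q1 1) (Pi.single q2 1)) (p1, p2)
  have e : (fun p : Fin 4 × Fin 4 => (Pi.single q1 1 : Fin 4 → ℂ) p.1 *
      (Pi.single q2 1 : Fin 4 → ℂ) p.2) = Pi.single (q1, q2) 1 := by
    ext ⟨a, b⟩
    simp only [Pi.single_apply, Prod.mk.injEq]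
    split_ifs <;> simp_all
  rw [e, Matrix.mulVec_single_one] at h
  simp only [Matrix.col_apply] at h
  have hc := complete hγ q2 p2 p1 q1
  rw [Matrix.sum_apply, Matrix.smul_apply, h]
  simp only [Matrix.kronecker_apply]
  rw [Finset.sum_congr rfl fun s _ => mul_comm _ _, hc]
  simp only [Pi.single_apply]
  by_cases h1 : p1 = q2 <;> by_cases h2 : p2 = q1 <;> simp [h1, h2, eq_comm]

lemma kron_one {γ : Fin 4 → M4} (hγ : Cliff γ) (a : Fin 4) : (γ a ⊗ₖ γ a) * (γ a ⊗ₖ γ a) = 1 := by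
  rw [← Matrix.mul_kronecker_mul, sq hγ, Matrix.one_kronecker_one]

lemma kron_comm {γ : Fin 4 → M4} (hγ : Cliff γ) (a b : Fin 4) :
    (γ a ⊗ₖ γ a) * (γ b ⊗ₖ γ b) = (γ b ⊗ₖ γ b) * (γ a ⊗ₖ γ a) := by
  by_cases h : a = b
  · rw [h]
  rw [← Matrix.mul_kronecker_mul, ← Matrix.mul_kronecker_mul, anti hγ h]
  ext p q
  simp [Matrix.kronecker_apply]

lemma kron_neg (A B : M4) : A ⊗ₖ (-B) = -(A ⊗ₖ B) := by
  ext p q; simp [Matrix.kronecker_apply]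

/-- the polynomial identity -/
lemma poly {R : Type*} [Ring R] [Algebra ℂ R] (a b c d : R)
    (ha : a * a = 1) (hb : b * b = 1) (hc : c * c = 1) (hd : d * d = 1)
    (ba : b * a = a * b) (ca : c * a = a * c) (da : d * a = a * d)
    (cb : c * b = b * c) (db : d * b = b * d) (dc : d * c = c * d) (z : R)
    (hz : z = (1/2 : ℂ) • (a + b + c + d)) :
    (1/6 : ℂ) • (z ^ 4 - (2 : ℂ) • z ^ 3 - (7 : ℂ) • z ^ 2 + (8 : ℂ) • z + (6 : ℂ) • (1 : R))
    = (1/4 : ℂ) • (1 + (a + b + c + d) -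
      (a * b + a * c + a * d + b * c + b * d + c * d)
      - (a * (b * c) + a * (b * d) + a * (c * d) + b * (c * d)) + a * (b * (c * d))) := by
  have L : ∀ {x y : R}, y * x = x * y → ∀ w, y * (x * w) = x * (y * w) := by
    intro x y h w; rw [← mul_assoc, h, mul_assoc]
  have Q : ∀ {x : R}, x * x = 1 → ∀ w, x * (x * w) = w := by
    intro x h w; rw [← mul_assoc, h, one_mul]
  have h2 : z ^ 2 = 1 + (1/2 : ℂ) • (a * b + a * c + a * d + b * c + b * d + c * d) := by
    rw [hz, pow_two]
    simp only [smul_mul_assoc, mul_smul_comm, add_mul, mul_add, mul_assoc, ha, hb, hc, hd,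
      ba, ca, da, cb, db, dc]
    module
  have h3 : z ^ 3 = (5/4 : ℂ) • (a + b + c + d) +
      (3/4 : ℂ) • (a * (b * c) + a * (b * d) + a * (c * d) + b * (c * d)) := by
    rw [pow_succ', h2, hz]
    simp only [smul_mul_assoc, mul_smul_comm, add_mul, mul_add, mul_assoc, ha, hb, hc, hd,
      ba, ca, da, cb, db, dc, Q ha, Q hb, Q hc, Q hd, L ba, L ca, L da, L cb, L db, L dc, mul_one]
    module
  have h4 : z ^ 4 = (5/2 : ℂ) • (1 : R) +
      (2 : ℂ) • (a * b + a * c + a * d + b * c + b * d + c * d)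
      + (3/2 : ℂ) • (a * (b * (c * d))) := by
    rw [pow_succ', h3, hz]
    simp only [smul_mul_assoc, mul_smul_comm, add_mul, mul_add, mul_assoc, ha, hb, hc, hd,
      ba, ca, da, cb, db, dc, Q ha, Q hb, Q hc, Q hd, L ba, L ca, L da, L cb, L db, L dc, mul_one]
    module
  rw [h4, h3, h2, hz]
  module

lemma sum_idx {A : Type*} [AddCommMonoid A] (f : Idx → A) :
    ∑ s, f s = ∑ a : Bool, ∑ b : Bool, ∑ c : Bool, ∑ d : Bool, f ![a, b, c, d] := by
  simp only [← Fintype.sum_prod_type']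
  symm
  refine Fintype.sum_bijective
    (fun p : ((Bool × Bool) × Bool) × Bool => (![p.1.1.1, p.1.1.2, p.1.2, p.2] : Idx))
    (by decide) _ _ (fun _ => rfl)

end SoFlip

open SoFlip in
/-- For a Clifford family `γ^1,…,γ^4` of `4×4` matrices and
`z = (1/2)·Σ_{a=1}^4 γ^a ⊗ γ^a`, the flip operator `S` on `ℂ⁴ ⊗ ℂ⁴` is the polynomial
`S = (1/6)(z⁴ − 2z³ − 7z² + 8z + 6)` in `z`. -/
theorem so4_flip_polynomial_in_z
    (γ : Fin 4 → Matrix (Fin 4) (Fin 4) ℂ)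
    (hγ : ∀ a b, γ a * γ b + γ b * γ a =
      if a = b then (2 : ℂ) • (1 : Matrix (Fin 4) (Fin 4) ℂ) else 0)
    (z : Matrix (Fin 4 × Fin 4) (Fin 4 × Fin 4) ℂ)
    (hz : z = (1/2 : ℂ) • ∑ a, γ a ⊗ₖ γ a)
    (S : Matrix (Fin 4 × Fin 4) (Fin 4 × Fin 4) ℂ)
    (hS : ∀ x y : Fin 4 → ℂ,
      S.mulVec (fun p => x p.1 * y p.2) = fun p => y p.1 * x p.2) :
    S = (1/6 : ℂ) • (z ^ 4 - (2 : ℂ) • z ^ 3 - (7 : ℂ) • z ^ 2 + (8 : ℂ) • z +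
          (6 : ℂ) • (1 : Matrix (Fin 4 × Fin 4) (Fin 4 × Fin 4) ℂ)) := by
  rw [Fin.sum_univ_four] at hz
  have K := kron_comm hγ
  rw [poly _ _ _ _ (kron_one hγ 0) (kron_one hγ 1) (kron_one hγ 2) (kron_one hγ 3)
    (K 1 0) (K 2 0) (K 3 0) (K 2 1) (K 3 1) (K 3 2) z hz]
  have h := sum_kron hγ hS
  have hS' : S = (1/4 : ℂ) • ∑ s, gam γ s ⊗ₖ gamR γ s := by rw [h]; module
  rw [hS']
  congr 1
  have L : ∀ {x y : M4}, y * x = -(x * y) → ∀ w, y * (x * w) = -(x * (y * w)) := by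
    intro x y h w; rw [← mul_assoc, h, neg_mul, mul_assoc]
  have a10 : γ 1 * γ 0 = -(γ 0 * γ 1) := anti hγ (by decide)
  have a20 : γ 2 * γ 0 = -(γ 0 * γ 2) := anti hγ (by decide)
  have a30 : γ 3 * γ 0 = -(γ 0 * γ 3) := anti hγ (by decide)
  have a21 : γ 2 * γ 1 = -(γ 1 * γ 2) := anti hγ (by decide)
  have a31 : γ 3 * γ 1 = -(γ 1 * γ 3) := anti hγ (by decide)
  have a32 : γ 3 * γ 2 = -(γ 2 * γ 3) := anti hγ (by decide)
  rw [sum_idx]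
  simp [gam, gamR, opt, a10, a20, a30, a21, a31, a32, L a10, L a20, L a30, L a21, L a31, L a32,
    kron_neg, ← Matrix.mul_kronecker_mul]
  abel
end

section
/- Let γ^1, γ^2, γ^3, γ^4 be a Clifford family of N×N complex matrices in dimension 4, let z = (1/2)·Σ_{a=1}^4 γ^a ⊗ γ^a, and let W := γ^1 γ^2 γ^3 γ^4 (the chirality matrix, W² = 1). Then W ⊗ W = (2/3)·z⁴ − (8/3)·z² + 1; equivalently, the chiral projector (1/2)(1 − W⊗W) equals −(1/3)·z²(z² − 4), the spectral projector of z onto the eigenvalues ±1, while (1/2)(1 + W⊗W) equals (1/3)(z²−1)(z²−3), the spectral projector onto the eigenvalues 0, ±2. -/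
open Kronecker

/-- Four commuting involutions: the square of the second elementary symmetric function. -/
theorem chir_aux {R : Type*} [Ring R] (A B C D : R)
    (hA : A * A = 1) (hB : B * B = 1) (hC : C * C = 1) (hD : D * D = 1)
    (hBA : B * A = A * B) (hCA : C * A = A * C) (hDA : D * A = A * D)
    (hCB : C * B = B * C) (hDB : D * B = B * D) (hDC : D * C = C * D) :
    (A + B + C + D) ^ 4 = 16 * (A + B + C + D) ^ 2 - 24 + 24 * (A * B * C * D) := by
  have ass : ∀ {x y u : R}, x * y = u → ∀ t, x * (y * t) = u * t := by
    intro x y u h t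
    rw [← mul_assoc, h]
  have h2 : (A + B + C + D) ^ 2 =
      4 + 2 * (A * B + A * C + A * D + B * C + B * D + C * D) := by
    simp only [pow_two, mul_add, add_mul, hA, hB, hC, hD, hBA, hCA, hDA, hCB, hDB, hDC]
    grind
  have h4 : (A * B + A * C + A * D + B * C + B * D + C * D) ^ 2 =
      6 + 4 * (A * B + A * C + A * D + B * C + B * D + C * D) + 6 * (A * B * C * D) := by
    simp only [pow_two, mul_add, add_mul, mul_assoc, one_mul, mul_one, hA, hB, hC, hD,
      hBA, hCA, hDA, hCB, hDB, hDC, ass hA, ass hB, ass hC, ass hD,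
      ass hBA, ass hCA, ass hDA, ass hCB, ass hDB, ass hDC]
    grind
  have h5 : (A + B + C + D) ^ 4 = ((A + B + C + D) ^ 2) ^ 2 := by rw [← pow_mul]
  rw [h5, h2]
  generalize A * B + A * C + A * D + B * C + B * D + C * D = e at h4 ⊢
  have h6 : (4 + 2 * e) ^ 2 = 16 + 16 * e + 4 * e ^ 2 := by grind
  rw [h6, h4]
  grind

/-- For a Clifford family `γ^1,…,γ^4` in dimension 4, `z = (1/2)·Σ_a γ^a ⊗ γ^a` and the
chirality matrix `W = γ^1γ^2γ^3γ^4`, one has `W⊗W = (2/3)z⁴ − (8/3)z² + 1`; equivalently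
the chiral projector `(1/2)(1 − W⊗W)` equals `−(1/3)z²(z² − 4)` (spectral projector onto
the eigenvalues ±1 of z) and `(1/2)(1 + W⊗W)` equals `(1/3)(z²−1)(z²−3)` (spectral
projector onto the eigenvalues 0, ±2). -/
theorem so4_chirality_tensor {N : ℕ}
    (γ : Fin 4 → Matrix (Fin N) (Fin N) ℂ)
    (hγ : ∀ a b, γ a * γ b + γ b * γ a =
      if a = b then (2 : ℂ) • (1 : Matrix (Fin N) (Fin N) ℂ) else 0)
    (z : Matrix (Fin N × Fin N) (Fin N × Fin N) ℂ)
    (hz : z = (1/2 : ℂ) • ∑ a, γ a ⊗ₖ γ a)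
    (W : Matrix (Fin N) (Fin N) ℂ)
    (hW : W = γ 0 * γ 1 * γ 2 * γ 3) :
    W ⊗ₖ W = (2/3 : ℂ) • z ^ 4 - (8/3 : ℂ) • z ^ 2 +
        (1 : Matrix (Fin N × Fin N) (Fin N × Fin N) ℂ) ∧
    (1/2 : ℂ) • ((1 : Matrix (Fin N × Fin N) (Fin N × Fin N) ℂ) - W ⊗ₖ W) =
      -((1/3 : ℂ) • (z ^ 2 * (z ^ 2 -
        (4 : ℂ) • (1 : Matrix (Fin N × Fin N) (Fin N × Fin N) ℂ)))) ∧
    (1/2 : ℂ) • ((1 : Matrix (Fin N × Fin N) (Fin N × Fin N) ℂ) + W ⊗ₖ W) =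
      (1/3 : ℂ) • ((z ^ 2 - (1 : Matrix (Fin N × Fin N) (Fin N × Fin N) ℂ)) *
        (z ^ 2 - (3 : ℂ) • (1 : Matrix (Fin N × Fin N) (Fin N × Fin N) ℂ))) := by
  have sq : ∀ a, γ a * γ a = 1 := by
    intro a
    have h := hγ a a
    rw [if_pos rfl, ← two_smul ℂ] at h
    exact smul_right_injective _ (two_ne_zero) h
  have S : ∀ a, (γ a ⊗ₖ γ a) * (γ a ⊗ₖ γ a) = 1 := by
    intro a
    rw [← Matrix.mul_kronecker_mul, sq, Matrix.one_kronecker_one]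
  have Cm : ∀ a b, a ≠ b →
      (γ a ⊗ₖ γ a) * (γ b ⊗ₖ γ b) = (γ b ⊗ₖ γ b) * (γ a ⊗ₖ γ a) := by
    intro a b hab
    have h := hγ a b
    rw [if_neg hab] at h
    have h' := eq_neg_of_add_eq_zero_left h
    rw [← Matrix.mul_kronecker_mul, ← Matrix.mul_kronecker_mul, h']
    ext i j
    simp [Matrix.kroneckerMap_apply]
  have key := chir_aux (γ 0 ⊗ₖ γ 0) (γ 1 ⊗ₖ γ 1) (γ 2 ⊗ₖ γ 2) (γ 3 ⊗ₖ γ 3)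
    (S 0) (S 1) (S 2) (S 3) (Cm _ _ (by decide)) (Cm _ _ (by decide)) (Cm _ _ (by decide))
    (Cm _ _ (by decide)) (Cm _ _ (by decide)) (Cm _ _ (by decide))
  have hWW : W ⊗ₖ W = (γ 0 ⊗ₖ γ 0) * (γ 1 ⊗ₖ γ 1) * (γ 2 ⊗ₖ γ 2) * (γ 3 ⊗ₖ γ 3) := by
    rw [hW]
    simp only [Matrix.mul_kronecker_mul]
  have hS : γ 0 ⊗ₖ γ 0 + γ 1 ⊗ₖ γ 1 + γ 2 ⊗ₖ γ 2 + γ 3 ⊗ₖ γ 3 = (2 : ℂ) • z := by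
    rw [hz, Fin.sum_univ_four, smul_smul]
    norm_num
  rw [← hWW, hS, smul_pow, smul_pow] at key
  have e16 : ∀ M : Matrix (Fin N × Fin N) (Fin N × Fin N) ℂ, 16 * M = (16 : ℂ) • M := by
    intro M
    rw [Algebra.smul_def, map_ofNat]
  have e24 : ∀ M : Matrix (Fin N × Fin N) (Fin N × Fin N) ℂ, 24 * M = (24 : ℂ) • M := by
    intro M
    rw [Algebra.smul_def, map_ofNat]
  have e24' := e24 1
  rw [mul_one] at e24'
  rw [e16, e24, e24'] at key
  have main : W ⊗ₖ W = (2/3 : ℂ) • z ^ 4 - (8/3 : ℂ) • z ^ 2 +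
      (1 : Matrix (Fin N × Fin N) (Fin N × Fin N) ℂ) := by
    linear_combination (norm := module) (-1/24 : ℂ) • key
  have z4 : z ^ 2 * z ^ 2 = z ^ 4 := by rw [← pow_add]
  refine ⟨main, ?_, ?_⟩
  · rw [main, mul_sub, z4, mul_smul_comm, mul_one]
    module
  · rw [main, mul_sub, sub_mul, sub_mul, z4, mul_smul_comm, mul_one, one_mul, one_mul]
    module
end

section
/- Let γ^1,…,γ^6 be a Clifford family of N×N complex matrices in dimension 6, let z = (1/2)·Σ_{a=1}^6 γ^a ⊗ γ^a, and let W := γ^1 γ^2 γ^3 γ^4 γ^5 γ^6 (so W² = −1). Then W ⊗ W = (4/45)·(z⁶ − (25/2)·z⁴ + 34·z² − 45/4); in particular (1/2)(1 + W⊗W) is the spectral projector of z onto the odd eigenvalues ±1, ±3 and (1/2)(1 − W⊗W) is the spectral projector onto the even eigenvalues 0, ±2. -/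
open Kronecker

/-- The identities for six commuting involutions, in a commutative ring. -/
lemma comm_identities {R : Type*} [CommRing R] (a b c d e f : R)
    (ha : a * a = 1) (hb : b * b = 1) (hc : c * c = 1) (hd : d * d = 1) (he : e * e = 1)
    (hf : f * f = 1) (s p : R) (hs : s = a + b + c + d + e + f)
    (hp : p = a * b * c * d * e * f) :
    s ^ 6 - 50 * s ^ 4 + 544 * s ^ 2 - 720 = 720 * p ∧
    (1 + p) * ((s ^ 2 - 4) * (s ^ 2 - 36)) = 0 ∧
    (1 - p) * (s * (s ^ 2 - 16)) = 0 := by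
  obtain ⟨e2, h2⟩ : ∃ t, t = a*b+a*c+a*d+a*e+a*f+b*c+b*d+b*e+b*f+c*d+c*e+c*f+d*e+d*f+e*f := ⟨_, rfl⟩
  obtain ⟨e3, h3⟩ : ∃ t, t = a*b*c+a*b*d+a*b*e+a*b*f+a*c*d+a*c*e+a*c*f+a*d*e+a*d*f+a*e*f
    +b*c*d+b*c*e+b*c*f+b*d*e+b*d*f+b*e*f+c*d*e+c*d*f+c*e*f+d*e*f := ⟨_, rfl⟩
  obtain ⟨e4, h4⟩ : ∃ t, t = a*b*c*d+a*b*c*e+a*b*c*f+a*b*d*e+a*b*d*f+a*b*e*f+a*c*d*e+a*c*d*f+a*c*e*f+a*d*e*f+b*c*d*e+b*c*d*f+b*c*e*f+b*d*e*f+c*d*e*f := ⟨_, rfl⟩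
  obtain ⟨e5, h5⟩ : ∃ t, t = a*b*c*d*e+a*b*c*d*f+a*b*c*e*f+a*b*d*e*f+a*c*d*e*f+b*c*d*e*f := ⟨_, rfl⟩
  have r1 : s * s = 2 * e2 + 6 * 1 := by
    rw [h2, hs]
    linear_combination (1) * ha + (1) * hb + (1) * hc + (1) * hd + (1) * he + (1) * hf
  have r2 : s * e2 = 3 * e3 + 5 * s := by
    rw [h2, h3, hs]
    linear_combination (b+c+d+e+f) * ha + (a+c+d+e+f) * hb + (a+b+d+e+f) * hc + (a+b+c+e+f) * hd + (a+b+c+d+f) * he + (a+b+c+d+e) * hf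
  have r3 : s * e3 = 4 * e4 + 4 * e2 := by
    rw [h2, h3, h4, hs]
    linear_combination (b*c+b*d+b*e+b*f+c*d+c*e+c*f+d*e+d*f+e*f) * ha + (a*c+a*d+a*e+a*f+c*d+c*e+c*f+d*e+d*f+e*f) * hb + (a*b+a*d+a*e+a*f+b*d+b*e+b*f+d*e+d*f+e*f) * hc + (a*b+a*c+a*e+a*f+b*c+b*e+b*f+c*e+c*f+e*f) * hd + (a*b+a*c+a*d+a*f+b*c+b*d+b*f+c*d+c*f+d*f) * he + (a*b+a*c+a*d+a*e+b*c+b*d+b*e+c*d+c*e+d*e) * hf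
  have r4 : s * e4 = 5 * e5 + 3 * e3 := by
    rw [h3, h4, h5, hs]
    linear_combination (b*c*d+b*c*e+b*c*f+b*d*e+b*d*f+b*e*f+c*d*e+c*d*f+c*e*f+d*e*f) * ha + (a*c*d+a*c*e+a*c*f+a*d*e+a*d*f+a*e*f+c*d*e+c*d*f+c*e*f+d*e*f) * hb + (a*b*d+a*b*e+a*b*f+a*d*e+a*d*f+a*e*f+b*d*e+b*d*f+b*e*f+d*e*f) * hc + (a*b*c+a*b*e+a*b*f+a*c*e+a*c*f+a*e*f+b*c*e+b*c*f+b*e*f+c*e*f) * hd + (a*b*c+a*b*d+a*b*f+a*c*d+a*c*f+a*d*f+b*c*d+b*c*f+b*d*f+c*d*f) * he + (a*b*c+a*b*d+a*b*e+a*c*d+a*c*e+a*d*e+b*c*d+b*c*e+b*d*e+c*d*e) * hf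
  have r5 : s * e5 = 6 * p + 2 * e4 := by
    rw [h4, h5, hp, hs]
    linear_combination (b*c*d*e+b*c*d*f+b*c*e*f+b*d*e*f+c*d*e*f) * ha + (a*c*d*e+a*c*d*f+a*c*e*f+a*d*e*f+c*d*e*f) * hb + (a*b*d*e+a*b*d*f+a*b*e*f+a*d*e*f+b*d*e*f) * hc + (a*b*c*e+a*b*c*f+a*b*e*f+a*c*e*f+b*c*e*f) * hd + (a*b*c*d+a*b*c*f+a*b*d*f+a*c*d*f+b*c*d*f) * he + (a*b*c*d+a*b*c*e+a*b*d*e+a*c*d*e+b*c*d*e) * hf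
  have r6 : s * p = 1 * e5 := by
    rw [h5, hp, hs]
    linear_combination (b*c*d*e*f) * ha + (a*c*d*e*f) * hb + (a*b*d*e*f) * hc + (a*b*c*e*f) * hd + (a*b*c*d*f) * he + (a*b*c*d*e) * hf
  clear h2 h3 h4 h5 hs hp
  have q2 : s ^ 2 = 2 * e2 + 6 := by linear_combination r1
  have q3 : s ^ 3 = 6 * e3 + 16 * s := by linear_combination s * q2 + 2 * r2
  have q4 : s ^ 4 = 24 * e4 + 56 * e2 + 96 := by linear_combination s * q3 + 6 * r3 + 16 * q2
  have q5 : s ^ 5 = 120 * e5 + 240 * e3 + 376 * s := by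
    linear_combination s * q4 + 24 * r4 + 56 * r2
  have q6 : s ^ 6 = 720 * p + 1200 * e4 + 1712 * e2 + 2256 := by
    linear_combination s * q5 + 120 * r5 + 240 * r3 + 376 * q2
  have p2 : s ^ 2 * p = 6 * p + 2 * e4 := by linear_combination s * r6 + r5
  have p3 : s ^ 3 * p = 16 * e5 + 6 * e3 := by linear_combination s * p2 + 6 * r6 + 2 * r4
  have p4 : s ^ 4 * p = 96 * p + 56 * e4 + 24 * e2 := by
    linear_combination s * p3 + 16 * r5 + 6 * r3
  refine ⟨?_, ?_, ?_⟩
  · linear_combination q6 - 50 * q4 + 544 * q2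
  · linear_combination q4 - 40 * q2 + p4 - 40 * p2
  · linear_combination q3 - p3 + 16 * r6

/-- The same identities for pairwise commuting involutions in a possibly noncommutative
complex algebra. -/
lemma alg_identities {A : Type*} [Ring A] [Algebra ℂ A] (x : Fin 6 → A)
    (hx : ∀ i, x i * x i = 1) (hc : ∀ i j, x i * x j = x j * x i) (s p : A)
    (hs : s = x 0 + x 1 + x 2 + x 3 + x 4 + x 5)
    (hp : p = x 0 * x 1 * x 2 * x 3 * x 4 * x 5) :
    s ^ 6 - 50 * s ^ 4 + 544 * s ^ 2 - 720 = 720 * p ∧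
    (1 + p) * ((s ^ 2 - 4) * (s ^ 2 - 36)) = 0 ∧
    (1 - p) * (s * (s ^ 2 - 16)) = 0 := by
  have hcomm : ∀ a ∈ Set.range x, ∀ b ∈ Set.range x, a * b = b * a := by
    rintro _ ⟨i, rfl⟩ _ ⟨j, rfl⟩
    exact hc i j
  letI : CommRing (Algebra.adjoin ℂ (Set.range x)) := Algebra.adjoinCommRingOfComm ℂ hcomm
  let y : Fin 6 → Algebra.adjoin ℂ (Set.range x) :=
    fun i => ⟨x i, Algebra.subset_adjoin ⟨i, rfl⟩⟩
  have hy : ∀ i, y i * y i = 1 := fun i => Subtype.ext (hx i)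
  obtain ⟨h1, h2, h3⟩ := comm_identities (y 0) (y 1) (y 2) (y 3) (y 4) (y 5) (hy 0) (hy 1) (hy 2)
    (hy 3) (hy 4) (hy 5) _ _ rfl rfl
  subst hs hp
  exact ⟨congrArg Subtype.val h1, congrArg Subtype.val h2, congrArg Subtype.val h3⟩

/-- For a Clifford family `γ^1,…,γ^6` in dimension 6, `z = (1/2)·Σ_a γ^a ⊗ γ^a` and
`W = γ^1γ^2γ^3γ^4γ^5γ^6`, one has
`W⊗W = (4/45)(z⁶ − (25/2)z⁴ + 34z² − 45/4)`; in particular `(1/2)(1 + W⊗W)` is supported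
on the odd eigenvalues ±1, ±3 of `z` (it is annihilated by `(z²−1)(z²−9)`) and
`(1/2)(1 − W⊗W)` is supported on the even eigenvalues 0, ±2 (it is annihilated by
`z(z²−4)`). -/
theorem so6_chirality_tensor {N : ℕ}
    (γ : Fin 6 → Matrix (Fin N) (Fin N) ℂ)
    (hγ : ∀ a b, γ a * γ b + γ b * γ a =
      if a = b then (2 : ℂ) • (1 : Matrix (Fin N) (Fin N) ℂ) else 0)
    (z : Matrix (Fin N × Fin N) (Fin N × Fin N) ℂ)
    (hz : z = (1/2 : ℂ) • ∑ a, γ a ⊗ₖ γ a)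
    (W : Matrix (Fin N) (Fin N) ℂ)
    (hW : W = γ 0 * γ 1 * γ 2 * γ 3 * γ 4 * γ 5) :
    W ⊗ₖ W = (4/45 : ℂ) • (z ^ 6 - (25/2 : ℂ) • z ^ 4 + (34 : ℂ) • z ^ 2 -
        (45/4 : ℂ) • (1 : Matrix (Fin N × Fin N) (Fin N × Fin N) ℂ)) ∧
    ((1/2 : ℂ) • ((1 : Matrix (Fin N × Fin N) (Fin N × Fin N) ℂ) + W ⊗ₖ W)) *
      ((z ^ 2 - (1 : Matrix (Fin N × Fin N) (Fin N × Fin N) ℂ)) *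
        (z ^ 2 - (9 : ℂ) • (1 : Matrix (Fin N × Fin N) (Fin N × Fin N) ℂ))) = 0 ∧
    ((1/2 : ℂ) • ((1 : Matrix (Fin N × Fin N) (Fin N × Fin N) ℂ) - W ⊗ₖ W)) *
      (z * (z ^ 2 - (4 : ℂ) • (1 : Matrix (Fin N × Fin N) (Fin N × Fin N) ℂ))) = 0 := by
  have hsq : ∀ i, γ i * γ i = 1 := by
    intro i
    have h := hγ i i
    rw [if_pos rfl, ← two_smul ℂ] at h
    exact smul_right_injective _ (two_ne_zero (α := ℂ)) h
  have hanti : ∀ i j, i ≠ j → γ i * γ j = -(γ j * γ i) := by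
    intro i j hij
    have h := hγ i j
    rw [if_neg hij] at h
    exact eq_neg_of_add_eq_zero_left h
  have hx : ∀ i, (γ i ⊗ₖ γ i) * (γ i ⊗ₖ γ i) = 1 := by
    intro i
    rw [← Matrix.mul_kronecker_mul, hsq, Matrix.one_kronecker_one]
  have hc : ∀ i j, (γ i ⊗ₖ γ i) * (γ j ⊗ₖ γ j) = (γ j ⊗ₖ γ j) * (γ i ⊗ₖ γ i) := by
    intro i j
    by_cases hij : i = j
    · rw [hij]
    · rw [← Matrix.mul_kronecker_mul, ← Matrix.mul_kronecker_mul, hanti i j hij]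
      ext ⟨a, b⟩ ⟨c, d⟩
      simp [Matrix.kroneckerMap_apply]
  have hs : (2 : ℂ) • z = γ 0 ⊗ₖ γ 0 + γ 1 ⊗ₖ γ 1 + γ 2 ⊗ₖ γ 2 + γ 3 ⊗ₖ γ 3 + γ 4 ⊗ₖ γ 4
      + γ 5 ⊗ₖ γ 5 := by
    rw [hz, smul_smul, Fin.sum_univ_six]
    norm_num
  have hp : W ⊗ₖ W = (γ 0 ⊗ₖ γ 0) * (γ 1 ⊗ₖ γ 1) * (γ 2 ⊗ₖ γ 2) * (γ 3 ⊗ₖ γ 3) * (γ 4 ⊗ₖ γ 4)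
      * (γ 5 ⊗ₖ γ 5) := by
    rw [hW]
    simp only [Matrix.mul_kronecker_mul]
  obtain ⟨h1, h2, h3⟩ := alg_identities (fun i => γ i ⊗ₖ γ i) hx hc _ _ hs hp
  generalize W ⊗ₖ W = p at *
  clear hs hp hx hc hz
  have num : ∀ (n : ℕ) [n.AtLeastTwo], (OfNat.ofNat n : Matrix (Fin N × Fin N) (Fin N × Fin N) ℂ)
      = (OfNat.ofNat n : ℂ) • 1 := by
    intro n _
    rw [← Algebra.algebraMap_eq_smul_one, map_ofNat]
  simp only [num, smul_pow, smul_mul_assoc, one_mul] at h1 h2 h3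
  have f2 : ((2 : ℂ) ^ 2 • z ^ 2 - (4 : ℂ) • (1 : Matrix (Fin N × Fin N) (Fin N × Fin N) ℂ))
      = (4 : ℂ) • (z ^ 2 - 1) := by module
  have f3 : ((2 : ℂ) ^ 2 • z ^ 2 - (36 : ℂ) • (1 : Matrix (Fin N × Fin N) (Fin N × Fin N) ℂ))
      = (4 : ℂ) • (z ^ 2 - (9 : ℂ) • 1) := by module
  have f4 : ((2 : ℂ) ^ 2 • z ^ 2 - (16 : ℂ) • (1 : Matrix (Fin N × Fin N) (Fin N × Fin N) ℂ))
      = (4 : ℂ) • (z ^ 2 - (4 : ℂ) • 1) := by module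
  rw [f2, f3] at h2
  rw [f4] at h3
  simp only [smul_mul_assoc, mul_smul_comm, smul_smul] at h2 h3
  refine ⟨?_, ?_, ?_⟩
  · linear_combination (norm := module) (-(1/720) : ℂ) • h1
  · rw [smul_mul_assoc, (smul_eq_zero.mp h2).resolve_left (by norm_num), smul_zero]
  · rw [smul_mul_assoc, (smul_eq_zero.mp h3).resolve_left (by norm_num), smul_zero]
end

section
/- Let V = ℂ⁴ with basis indexed by {1,2,3,4} and for each complex u define the operator R(u) on V ⊗ V by its only nonzero matrix entries: R^{αα}_{αα}(u) = u+1 for α = 1,2,3,4; R^{14}_{14}(u) = R^{23}_{23}(u) = R^{32}_{32}(u) = R^{41}_{41}(u) = u; and R^{14}_{41}(u) = R^{41}_{14}(u) = R^{23}_{32}(u) = R^{32}_{23}(u) = 1. Then R satisfies the Yang–Baxter equation: for all complex u, v, R_{12}(u−v) · R_{13}(u) · R_{23}(v) = R_{23}(v) · R_{13}(u) · R_{12}(u−v) on V ⊗ V ⊗ V. -/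
/-- The chiral part `ℛ⁽²⁾` of the spinorial `so(4)` R-matrix on `ℂ⁴ ⊗ ℂ⁴`
(basis indexed by `{1,2,3,4}`, here realized as `Fin 4` via `α ↦ α+1`).
Its only nonzero entries are `R^{αα}_{αα} = u+1`,
`R^{14}_{14} = R^{23}_{23} = R^{32}_{32} = R^{41}_{41} = u`, and
`R^{14}_{41} = R^{41}_{14} = R^{23}_{32} = R^{32}_{23} = 1`. -/
def chiralSo4R (u : ℂ) : Matrix (Fin 4 × Fin 4) (Fin 4 × Fin 4) ℂ :=
  Matrix.of fun p q =>
    if p.1 = p.2 ∧ q = p then u + 1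
    else if (p.1 : ℕ) + (p.2 : ℕ) = 3 ∧ q = p then u
    else if (p.1 : ℕ) + (p.2 : ℕ) = 3 ∧ q = (p.2, p.1) then 1
    else 0

/-- `R₁₂(u)` on `ℂ⁴ ⊗ ℂ⁴ ⊗ ℂ⁴`. -/
def chiralSo4R12 (u : ℂ) : Matrix (Fin 4 × Fin 4 × Fin 4) (Fin 4 × Fin 4 × Fin 4) ℂ :=
  Matrix.of fun p q =>
    chiralSo4R u (p.1, p.2.1) (q.1, q.2.1) * (if p.2.2 = q.2.2 then 1 else 0)

/-- `R₁₃(u)` on `ℂ⁴ ⊗ ℂ⁴ ⊗ ℂ⁴`. -/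
def chiralSo4R13 (u : ℂ) : Matrix (Fin 4 × Fin 4 × Fin 4) (Fin 4 × Fin 4 × Fin 4) ℂ :=
  Matrix.of fun p q =>
    chiralSo4R u (p.1, p.2.2) (q.1, q.2.2) * (if p.2.1 = q.2.1 then 1 else 0)

/-- `R₂₃(u)` on `ℂ⁴ ⊗ ℂ⁴ ⊗ ℂ⁴`. -/
def chiralSo4R23 (u : ℂ) : Matrix (Fin 4 × Fin 4 × Fin 4) (Fin 4 × Fin 4 × Fin 4) ℂ :=
  Matrix.of fun p q =>
    chiralSo4R u (p.2.1, p.2.2) (q.2.1, q.2.2) * (if p.1 = q.1 then 1 else 0)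

/-- Two indices lie in the same block. -/
def sameBlk (a b : Fin 4) : Prop := a = b ∨ (a : ℕ) + (b : ℕ) = 3

instance (a b : Fin 4) : Decidable (sameBlk a b) := by unfold sameBlk; infer_instance

theorem sameBlk_comm : ∀ a b : Fin 4, sameBlk a b ↔ sameBlk b a := by decide

theorem sameBlk_trans : ∀ a b c : Fin 4, sameBlk a b → sameBlk b c → sameBlk a c := by decide

theorem chiralSo4R_entry (u : ℂ) (a b c d : Fin 4) :
    chiralSo4R u (a, b) (c, d) = if sameBlk a b then
      u * (if a = c ∧ b = d then 1 else 0) + (if b = c ∧ a = d then 1 else 0) else 0 := by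
  have h : ∀ a : Fin 4, (a : ℕ) + (a : ℕ) ≠ 3 := by decide
  simp only [chiralSo4R, Matrix.of_apply, sameBlk, Prod.mk.injEq]
  by_cases hab : a = b
  · subst hab
    simp only [h, eq_comm (a := c), eq_comm (a := d)]
    by_cases h1 : a = c <;> by_cases h2 : a = d <;> split_ifs <;> first | ring1 | (exfalso; tauto)
  · by_cases h3 : (a : ℕ) + (b : ℕ) = 3
    · simp only [hab, h3, eq_comm (a := c), eq_comm (a := d)]
      by_cases h1 : a = c <;> by_cases h2 : b = d <;>
        by_cases h4 : b = c <;> by_cases h5 : a = d <;> simp_all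
    · simp [hab, h3]

theorem chiralSo4R12_mul (u : ℂ) (M : Matrix (Fin 4 × Fin 4 × Fin 4) (Fin 4 × Fin 4 × Fin 4) ℂ)
    (a b c : Fin 4) (q : Fin 4 × Fin 4 × Fin 4) :
    (chiralSo4R12 u * M) (a, b, c) q =
      if sameBlk a b then u * M (a, b, c) q + M (b, a, c) q else 0 := by
  simp only [Matrix.mul_apply, chiralSo4R12, Matrix.of_apply, chiralSo4R_entry]
  split_ifs with h
  · rw [← Fintype.sum_ite_eq (a, b, c) (fun r => u * M r q),
      ← Fintype.sum_ite_eq (b, a, c) (fun r => M r q), ← Finset.sum_add_distrib]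
    refine Finset.sum_congr rfl ?_
    rintro ⟨x, y, z⟩ -
    simp only [Prod.mk.injEq]
    split_ifs <;> first | ring1 | (exfalso; tauto)
  · simp

theorem chiralSo4R13_mul (u : ℂ) (M : Matrix (Fin 4 × Fin 4 × Fin 4) (Fin 4 × Fin 4 × Fin 4) ℂ)
    (a b c : Fin 4) (q : Fin 4 × Fin 4 × Fin 4) :
    (chiralSo4R13 u * M) (a, b, c) q =
      if sameBlk a c then u * M (a, b, c) q + M (c, b, a) q else 0 := by
  simp only [Matrix.mul_apply, chiralSo4R13, Matrix.of_apply, chiralSo4R_entry]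
  split_ifs with h
  · rw [← Fintype.sum_ite_eq (a, b, c) (fun r => u * M r q),
      ← Fintype.sum_ite_eq (c, b, a) (fun r => M r q), ← Finset.sum_add_distrib]
    refine Finset.sum_congr rfl ?_
    rintro ⟨x, y, z⟩ -
    simp only [Prod.mk.injEq]
    split_ifs <;> first | ring1 | (exfalso; tauto)
  · simp

theorem chiralSo4R23_mul (u : ℂ) (M : Matrix (Fin 4 × Fin 4 × Fin 4) (Fin 4 × Fin 4 × Fin 4) ℂ)
    (a b c : Fin 4) (q : Fin 4 × Fin 4 × Fin 4) :
    (chiralSo4R23 u * M) (a, b, c) q =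
      if sameBlk b c then u * M (a, b, c) q + M (a, c, b) q else 0 := by
  simp only [Matrix.mul_apply, chiralSo4R23, Matrix.of_apply, chiralSo4R_entry]
  split_ifs with h
  · rw [← Fintype.sum_ite_eq (a, b, c) (fun r => u * M r q),
      ← Fintype.sum_ite_eq (a, c, b) (fun r => M r q), ← Finset.sum_add_distrib]
    refine Finset.sum_congr rfl ?_
    rintro ⟨x, y, z⟩ -
    simp only [Prod.mk.injEq]
    split_ifs <;> first | ring1 | (exfalso; tauto)
  · simp

/-- The chiral part of the spinorial `so(4)` R-matrix satisfies the Yang–Baxter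
equation. -/
theorem chiralSo4R_YangBaxter (u v : ℂ) :
    chiralSo4R12 (u - v) * chiralSo4R13 u * chiralSo4R23 v =
      chiralSo4R23 v * chiralSo4R13 u * chiralSo4R12 (u - v) := by
  rw [← mul_one (chiralSo4R12 (u - v) * chiralSo4R13 u * chiralSo4R23 v),
    ← mul_one (chiralSo4R23 v * chiralSo4R13 u * chiralSo4R12 (u - v))]
  simp only [mul_assoc]
  generalize (1 : Matrix (Fin 4 × Fin 4 × Fin 4) (Fin 4 × Fin 4 × Fin 4) ℂ) = M
  ext ⟨a, b, c⟩ q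
  simp only [chiralSo4R12_mul, chiralSo4R13_mul, chiralSo4R23_mul]
  simp only [sameBlk_comm b a, sameBlk_comm c a, sameBlk_comm c b]
  have t1 := sameBlk_trans a b c
  have t2 := sameBlk_trans a c b
  have t3 := sameBlk_trans b a c
  rw [sameBlk_comm c b] at t2
  rw [sameBlk_comm b a] at t3
  by_cases h1 : sameBlk a b <;> by_cases h2 : sameBlk b c <;> by_cases h3 : sameBlk a c <;>
    simp only [h1, h2, h3, if_true, if_false] at t1 t2 t3 ⊢ <;> first | ring1 | simp_all
end

section
/- Let γ^1, γ^2, γ^3, γ^4 be a Clifford family of N×N complex matrices in dimension 4, set γ^{ab} := (1/2)(γ^a γ^b − γ^b γ^a) and W := γ^1 γ^2 γ^3 γ^4. Then for all indices a, c ∈ {1,2,3,4} the intertwining identity (1⊗1 − W⊗W) · Σ_{b=1}^4 (γ^{ab} ⊗ γ^{bc}) = ( Σ_{b=1}^4 (γ^{bc} ⊗ γ^{ab}) ) · (1⊗1 − W⊗W) holds; i.e. the chiral projector onto the sector where (1/2)Σ_a γ^a⊗γ^a has eigenvalues ±1 intertwines the two orderings of the product of so(4) spinor L-operator generators. -/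
open Kronecker

set_option linter.unusedSimpArgs false

/-- The chiral projector `(1/2)(1⊗1 − W⊗W)`, `W = γ^1γ^2γ^3γ^4`, intertwines the two
orderings of the product of `so(4)` spinor L-operator generators
`γ^{ab} = (1/2)(γ^aγ^b − γ^bγ^a)`:
`(1⊗1 − W⊗W)·Σ_b γ^{ab} ⊗ γ^{bc} = (Σ_b γ^{bc} ⊗ γ^{ab})·(1⊗1 − W⊗W)`. -/
theorem so4_chiral_projector_intertwines {N : ℕ}
    (γ : Fin 4 → Matrix (Fin N) (Fin N) ℂ)
    (hγ : ∀ a b, γ a * γ b + γ b * γ a =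
      if a = b then (2 : ℂ) • (1 : Matrix (Fin N) (Fin N) ℂ) else 0)
    (γ2 : Fin 4 → Fin 4 → Matrix (Fin N) (Fin N) ℂ)
    (hγ2 : ∀ a b, γ2 a b = (1/2 : ℂ) • (γ a * γ b - γ b * γ a))
    (W : Matrix (Fin N) (Fin N) ℂ)
    (hW : W = γ 0 * γ 1 * γ 2 * γ 3) :
    ∀ a c : Fin 4,
      ((1 : Matrix (Fin N) (Fin N) ℂ) ⊗ₖ (1 : Matrix (Fin N) (Fin N) ℂ) - W ⊗ₖ W) *
          (∑ b, γ2 a b ⊗ₖ γ2 b c) =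
        (∑ b, γ2 b c ⊗ₖ γ2 a b) *
          ((1 : Matrix (Fin N) (Fin N) ℂ) ⊗ₖ (1 : Matrix (Fin N) (Fin N) ℂ) - W ⊗ₖ W) := by
  have sq : ∀ i, γ i * γ i = 1 := by
    intro i
    have h := hγ i i
    rw [if_pos rfl, ← two_smul ℂ] at h
    exact smul_right_injective _ (two_ne_zero (α := ℂ)) h
  have sw : ∀ i j, j < i → γ i * γ j = -(γ j * γ i) := by
    intro i j h
    have h' := hγ i j
    rw [if_neg h.ne'] at h'
    exact eq_neg_of_add_eq_zero_left h'
  have sq' : ∀ i X, γ i * (γ i * X) = X := by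
    intro i X
    rw [← mul_assoc, sq, one_mul]
  have sw' : ∀ i j, j < i → ∀ X, γ i * (γ j * X) = -(γ j * (γ i * X)) := by
    intro i j h X
    rw [← mul_assoc, sw i j h, neg_mul, mul_assoc]
  have dg : ∀ i, γ2 i i = 0 := by
    intro i
    rw [hγ2, sub_self, smul_zero]
  have up : ∀ i j, i < j → γ2 i j = γ i * γ j := by
    intro i j h
    rw [hγ2, sw j i h, sub_neg_eq_add, ← two_smul ℂ, smul_smul]
    norm_num
  have dn : ∀ i j, j < i → γ2 i j = -γ2 j i := by
    intro i j _
    rw [hγ2, hγ2, ← smul_neg, neg_sub]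
  have s10 := sw 1 0 (by decide)
  have t10 := sw' 1 0 (by decide)
  have d10 := dn 1 0 (by decide)
  have s20 := sw 2 0 (by decide)
  have t20 := sw' 2 0 (by decide)
  have d20 := dn 2 0 (by decide)
  have s21 := sw 2 1 (by decide)
  have t21 := sw' 2 1 (by decide)
  have d21 := dn 2 1 (by decide)
  have s30 := sw 3 0 (by decide)
  have t30 := sw' 3 0 (by decide)
  have d30 := dn 3 0 (by decide)
  have s31 := sw 3 1 (by decide)
  have t31 := sw' 3 1 (by decide)
  have d31 := dn 3 1 (by decide)
  have s32 := sw 3 2 (by decide)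
  have t32 := sw' 3 2 (by decide)
  have d32 := dn 3 2 (by decide)
  have l01 : W * γ2 0 1 = -γ2 2 3 := by
    rw [hW, up 0 1 (by decide), up 2 3 (by decide)]
    simp only [mul_assoc, sq, sq', s10, t10, s20, t20, s21, t21, s30, t30, s31, t31, s32, t32, mul_neg, neg_mul, neg_neg, mul_one]
  have r01 : γ2 0 1 * W = -γ2 2 3 := by
    rw [hW, up 0 1 (by decide), up 2 3 (by decide)]
    simp only [mul_assoc, sq, sq', s10, t10, s20, t20, s21, t21, s30, t30, s31, t31, s32, t32, mul_neg, neg_mul, neg_neg, mul_one]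
  have l23 : W * γ2 2 3 = -γ2 0 1 := by
    rw [hW, up 2 3 (by decide), up 0 1 (by decide)]
    simp only [mul_assoc, sq, sq', s10, t10, s20, t20, s21, t21, s30, t30, s31, t31, s32, t32, mul_neg, neg_mul, neg_neg, mul_one]
  have r23 : γ2 2 3 * W = -γ2 0 1 := by
    rw [hW, up 2 3 (by decide), up 0 1 (by decide)]
    simp only [mul_assoc, sq, sq', s10, t10, s20, t20, s21, t21, s30, t30, s31, t31, s32, t32, mul_neg, neg_mul, neg_neg, mul_one]
  have l02 : W * γ2 0 2 = γ2 1 3 := by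
    rw [hW, up 0 2 (by decide), up 1 3 (by decide)]
    simp only [mul_assoc, sq, sq', s10, t10, s20, t20, s21, t21, s30, t30, s31, t31, s32, t32, mul_neg, neg_mul, neg_neg, mul_one]
  have r02 : γ2 0 2 * W = γ2 1 3 := by
    rw [hW, up 0 2 (by decide), up 1 3 (by decide)]
    simp only [mul_assoc, sq, sq', s10, t10, s20, t20, s21, t21, s30, t30, s31, t31, s32, t32, mul_neg, neg_mul, neg_neg, mul_one]
  have l13 : W * γ2 1 3 = γ2 0 2 := by
    rw [hW, up 1 3 (by decide), up 0 2 (by decide)]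
    simp only [mul_assoc, sq, sq', s10, t10, s20, t20, s21, t21, s30, t30, s31, t31, s32, t32, mul_neg, neg_mul, neg_neg, mul_one]
  have r13 : γ2 1 3 * W = γ2 0 2 := by
    rw [hW, up 1 3 (by decide), up 0 2 (by decide)]
    simp only [mul_assoc, sq, sq', s10, t10, s20, t20, s21, t21, s30, t30, s31, t31, s32, t32, mul_neg, neg_mul, neg_neg, mul_one]
  have l03 : W * γ2 0 3 = -γ2 1 2 := by
    rw [hW, up 0 3 (by decide), up 1 2 (by decide)]
    simp only [mul_assoc, sq, sq', s10, t10, s20, t20, s21, t21, s30, t30, s31, t31, s32, t32, mul_neg, neg_mul, neg_neg, mul_one]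
  have r03 : γ2 0 3 * W = -γ2 1 2 := by
    rw [hW, up 0 3 (by decide), up 1 2 (by decide)]
    simp only [mul_assoc, sq, sq', s10, t10, s20, t20, s21, t21, s30, t30, s31, t31, s32, t32, mul_neg, neg_mul, neg_neg, mul_one]
  have l12 : W * γ2 1 2 = -γ2 0 3 := by
    rw [hW, up 1 2 (by decide), up 0 3 (by decide)]
    simp only [mul_assoc, sq, sq', s10, t10, s20, t20, s21, t21, s30, t30, s31, t31, s32, t32, mul_neg, neg_mul, neg_neg, mul_one]
  have r12 : γ2 1 2 * W = -γ2 0 3 := by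
    rw [hW, up 1 2 (by decide), up 0 3 (by decide)]
    simp only [mul_assoc, sq, sq', s10, t10, s20, t20, s21, t21, s30, t30, s31, t31, s32, t32, mul_neg, neg_mul, neg_neg, mul_one]
  have kn : ∀ A B : Matrix (Fin N) (Fin N) ℂ, (-A) ⊗ₖ B = -(A ⊗ₖ B) := by
    intro A B
    ext
    simp
  have nk : ∀ A B : Matrix (Fin N) (Fin N) ℂ, A ⊗ₖ (-B) = -(A ⊗ₖ B) := by
    intro A B
    ext
    simp
  clear hW hγ hγ2 sq sw sq' sw' up dn
  intro a c
  fin_cases a <;> fin_cases c <;>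
  · simp only [Fin.sum_univ_four, Fin.zero_eta, Fin.mk_one, Fin.reduceFinMk, dg, d10, d20, d21, d30, d31, d32,
      Matrix.zero_kronecker, Matrix.kronecker_zero, kn, nk, sub_mul, mul_sub, mul_add, add_mul,
      ← Matrix.mul_kronecker_mul, one_mul, mul_one, mul_zero, zero_mul, mul_neg, neg_mul,
      l01, r01, l23, r23, l02, r02, l13, r13, l03, r03, l12, r12]
    try abel
end

section
/- Let V = ℂ⁴ with basis indexed by {1,2,3,4}, define ε^{αβ} := (−1)^α if α + β = 5 and 0 otherwise, and ε_{αβ} by the same formula. For each complex u define the operator R(u) on V ⊗ V by its matrix entries R^{α_1 α_2}_{β_1 β_2}(u) := 2u(2u+3)·δ^{α_1}_{β_1}δ^{α_2}_{β_2} + (2u+3)·δ^{α_1}_{β_2}δ^{α_2}_{β_1} − 2u·ε^{α_1 α_2}·ε_{β_1 β_2}. Then R satisfies the Yang–Baxter equation: for all complex u, v, R_{12}(u−v) · R_{13}(u) · R_{23}(v) = R_{23}(v) · R_{13}(u) · R_{12}(u−v) on V ⊗ V ⊗ V. -/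
/-- The antisymmetric symplectic metric `ε` on `ℂ⁴` (basis indexed by `{1,2,3,4}`,
realized as `Fin 4` via `α ↦ α+1`): `ε^{αβ} = (−1)^α` if `α + β = 5` and `0` otherwise. -/
def symplEps (a b : Fin 4) : ℂ :=
  if (a : ℕ) + (b : ℕ) = 3 then (-1 : ℂ) ^ ((a : ℕ) + 1) else 0

/-- The spinorial `so(5)` R-matrix on `ℂ⁴ ⊗ ℂ⁴`, which after the rescaling `2u → u`
coincides with the fundamental `sp(4)` R-matrix:
`R^{α₁α₂}_{β₁β₂}(u) = 2u(2u+3)·δδ + (2u+3)·δδ(swap) − 2u·ε^{α₁α₂}ε_{β₁β₂}`. -/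
noncomputable def so5SpinR (u : ℂ) : Matrix (Fin 4 × Fin 4) (Fin 4 × Fin 4) ℂ :=
  Matrix.of fun p q =>
    2 * u * (2 * u + 3) * (if p.1 = q.1 then 1 else 0) * (if p.2 = q.2 then 1 else 0) +
      (2 * u + 3) * (if p.1 = q.2 then 1 else 0) * (if p.2 = q.1 then 1 else 0) -
      2 * u * symplEps p.1 p.2 * symplEps q.1 q.2

/-- `R₁₂(u)` on `ℂ⁴ ⊗ ℂ⁴ ⊗ ℂ⁴`. -/
noncomputable def so5SpinR12 (u : ℂ) :
    Matrix (Fin 4 × Fin 4 × Fin 4) (Fin 4 × Fin 4 × Fin 4) ℂ :=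
  Matrix.of fun p q =>
    so5SpinR u (p.1, p.2.1) (q.1, q.2.1) * (if p.2.2 = q.2.2 then 1 else 0)

/-- `R₁₃(u)` on `ℂ⁴ ⊗ ℂ⁴ ⊗ ℂ⁴`. -/
noncomputable def so5SpinR13 (u : ℂ) :
    Matrix (Fin 4 × Fin 4 × Fin 4) (Fin 4 × Fin 4 × Fin 4) ℂ :=
  Matrix.of fun p q =>
    so5SpinR u (p.1, p.2.2) (q.1, q.2.2) * (if p.2.1 = q.2.1 then 1 else 0)

/-- `R₂₃(u)` on `ℂ⁴ ⊗ ℂ⁴ ⊗ ℂ⁴`. -/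
noncomputable def so5SpinR23 (u : ℂ) :
    Matrix (Fin 4 × Fin 4 × Fin 4) (Fin 4 × Fin 4 × Fin 4) ℂ :=
  Matrix.of fun p q =>
    so5SpinR u (p.2.1, p.2.2) (q.2.1, q.2.2) * (if p.1 = q.1 then 1 else 0)

set_option linter.all false

namespace SpinYB

/-- the triple index -/
abbrev T := Fin 4 × Fin 4 × Fin 4

def s12 (p : T) : T := (p.2.1, p.1, p.2.2)
def s13 (p : T) : T := (p.2.2, p.2.1, p.1)
def s23 (p : T) : T := (p.1, p.2.2, p.2.1)

/-- permutation matrix -/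
def P (s : T → T) : Matrix T T ℂ := Matrix.of fun p q => if s p = q then 1 else 0

def W12 : Matrix T (Fin 4) ℂ := Matrix.of fun p d => symplEps p.1 p.2.1 * if p.2.2 = d then 1 else 0
def W13 : Matrix T (Fin 4) ℂ := Matrix.of fun p d => symplEps p.1 p.2.2 * if p.2.1 = d then 1 else 0
def W23 : Matrix T (Fin 4) ℂ := Matrix.of fun p d => symplEps p.2.1 p.2.2 * if p.1 = d then 1 else 0

theorem P_mul {n : Type*} (s : T → T) (M : Matrix T n ℂ) : P s * M = M.submatrix s id := by
  ext p d
  simp [P, Matrix.mul_apply]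

theorem eps_anti (a b : Fin 4) : symplEps a b = - symplEps b a := by
  fin_cases a <;> fin_cases b <;> simp [symplEps] <;> norm_num

theorem P12_t : (P s12).transpose = P s12 := by
  ext ⟨a, b, c⟩ ⟨d, e, f⟩
  simp only [P, s12, Matrix.transpose_apply, Matrix.of_apply, Prod.mk.injEq]
  congr 1
  apply propext
  tauto

theorem P13_t : (P s13).transpose = P s13 := by
  ext ⟨a, b, c⟩ ⟨d, e, f⟩
  simp only [P, s13, Matrix.transpose_apply, Matrix.of_apply, Prod.mk.injEq]
  congr 1
  apply propext
  tauto

theorem P23_t : (P s23).transpose = P s23 := by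
  ext ⟨a, b, c⟩ ⟨d, e, f⟩
  simp only [P, s23, Matrix.transpose_apply, Matrix.of_apply, Prod.mk.injEq]
  congr 1
  apply propext
  tauto

theorem P_P (s t : T → T) : P s * P t = P (t ∘ s) := by
  rw [P_mul]; rfl

theorem P_id : P id = 1 := by
  ext p q
  simp [P, Matrix.one_apply]

/-- Left multiplication form of a product identity, for rewriting right-associated products. -/
theorem lft {k l m n : Type*} [Fintype l] [Fintype m] {A : Matrix k l ℂ} {B : Matrix l m ℂ}
    {C : Matrix k m ℂ} (h : A * B = C) (X : Matrix m n ℂ) : A * (B * X) = C * X := by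
  rw [← Matrix.mul_assoc, h]

theorem P12_W12 : P s12 * W12 = -W12 := by
  rw [P_mul]
  ext ⟨a, b, c⟩ d
  simp only [W12, W13, W23, s12, Matrix.submatrix_apply, Matrix.of_apply, Matrix.neg_apply, id]
  first
    | done
    | (rw [eps_anti]; ring)

theorem W12_P12 : W12.transpose * P s12 = -W12.transpose := by
  have h := congrArg Matrix.transpose P12_W12
  simpa [Matrix.transpose_mul, P12_t] using h

theorem P12_W13 : P s12 * W13 = W23 := by
  rw [P_mul]
  ext ⟨a, b, c⟩ d
  simp only [W12, W13, W23, s12, Matrix.submatrix_apply, Matrix.of_apply, Matrix.neg_apply, id]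
  first
    | done
    | (rw [eps_anti]; ring)

theorem W13_P12 : W13.transpose * P s12 = W23.transpose := by
  have h := congrArg Matrix.transpose P12_W13
  simpa [Matrix.transpose_mul, P12_t] using h

theorem P12_W23 : P s12 * W23 = W13 := by
  rw [P_mul]
  ext ⟨a, b, c⟩ d
  simp only [W12, W13, W23, s12, Matrix.submatrix_apply, Matrix.of_apply, Matrix.neg_apply, id]
  first
    | done
    | (rw [eps_anti]; ring)

theorem W23_P12 : W23.transpose * P s12 = W13.transpose := by
  have h := congrArg Matrix.transpose P12_W23
  simpa [Matrix.transpose_mul, P12_t] using h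

theorem P13_W12 : P s13 * W12 = -W23 := by
  rw [P_mul]
  ext ⟨a, b, c⟩ d
  simp only [W12, W13, W23, s13, Matrix.submatrix_apply, Matrix.of_apply, Matrix.neg_apply, id]
  first
    | done
    | (rw [eps_anti]; ring)

theorem W12_P13 : W12.transpose * P s13 = -W23.transpose := by
  have h := congrArg Matrix.transpose P13_W12
  simpa [Matrix.transpose_mul, P13_t] using h

theorem P13_W13 : P s13 * W13 = -W13 := by
  rw [P_mul]
  ext ⟨a, b, c⟩ d
  simp only [W12, W13, W23, s13, Matrix.submatrix_apply, Matrix.of_apply, Matrix.neg_apply, id]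
  first
    | done
    | (rw [eps_anti]; ring)

theorem W13_P13 : W13.transpose * P s13 = -W13.transpose := by
  have h := congrArg Matrix.transpose P13_W13
  simpa [Matrix.transpose_mul, P13_t] using h

theorem P13_W23 : P s13 * W23 = -W12 := by
  rw [P_mul]
  ext ⟨a, b, c⟩ d
  simp only [W12, W13, W23, s13, Matrix.submatrix_apply, Matrix.of_apply, Matrix.neg_apply, id]
  first
    | done
    | (rw [eps_anti]; ring)

theorem W23_P13 : W23.transpose * P s13 = -W12.transpose := by
  have h := congrArg Matrix.transpose P13_W23
  simpa [Matrix.transpose_mul, P13_t] using h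

theorem P23_W12 : P s23 * W12 = W13 := by
  rw [P_mul]
  ext ⟨a, b, c⟩ d
  simp only [W12, W13, W23, s23, Matrix.submatrix_apply, Matrix.of_apply, Matrix.neg_apply, id]
  first
    | done
    | (rw [eps_anti]; ring)

theorem W12_P23 : W12.transpose * P s23 = W13.transpose := by
  have h := congrArg Matrix.transpose P23_W12
  simpa [Matrix.transpose_mul, P23_t] using h

theorem P23_W13 : P s23 * W13 = W12 := by
  rw [P_mul]
  ext ⟨a, b, c⟩ d
  simp only [W12, W13, W23, s23, Matrix.submatrix_apply, Matrix.of_apply, Matrix.neg_apply, id]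
  first
    | done
    | (rw [eps_anti]; ring)

theorem W13_P23 : W13.transpose * P s23 = W12.transpose := by
  have h := congrArg Matrix.transpose P23_W13
  simpa [Matrix.transpose_mul, P23_t] using h

theorem P23_W23 : P s23 * W23 = -W23 := by
  rw [P_mul]
  ext ⟨a, b, c⟩ d
  simp only [W12, W13, W23, s23, Matrix.submatrix_apply, Matrix.of_apply, Matrix.neg_apply, id]
  first
    | done
    | (rw [eps_anti]; ring)

theorem W23_P23 : W23.transpose * P s23 = -W23.transpose := by
  have h := congrArg Matrix.transpose P23_W23
  simpa [Matrix.transpose_mul, P23_t] using h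

theorem W12_W12 : W12.transpose * W12 = (4 : ℂ) • (1 : Matrix (Fin 4) (Fin 4) ℂ) := by
  ext d e
  fin_cases d <;> fin_cases e <;>
    simp [Matrix.mul_apply, W12, W13, W23, Fintype.sum_prod_type, Fin.sum_univ_four, symplEps] <;> norm_num

theorem W12_W13 : W12.transpose * W13 = (1 : ℂ) • (1 : Matrix (Fin 4) (Fin 4) ℂ) := by
  ext d e
  fin_cases d <;> fin_cases e <;>
    simp [Matrix.mul_apply, W12, W13, W23, Fintype.sum_prod_type, Fin.sum_univ_four, symplEps] <;> norm_num

theorem W12_W23 : W12.transpose * W23 = (-1 : ℂ) • (1 : Matrix (Fin 4) (Fin 4) ℂ) := by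
  ext d e
  fin_cases d <;> fin_cases e <;>
    simp [Matrix.mul_apply, W12, W13, W23, Fintype.sum_prod_type, Fin.sum_univ_four, symplEps] <;> norm_num

theorem W13_W12 : W13.transpose * W12 = (1 : ℂ) • (1 : Matrix (Fin 4) (Fin 4) ℂ) := by
  ext d e
  fin_cases d <;> fin_cases e <;>
    simp [Matrix.mul_apply, W12, W13, W23, Fintype.sum_prod_type, Fin.sum_univ_four, symplEps] <;> norm_num

theorem W13_W13 : W13.transpose * W13 = (4 : ℂ) • (1 : Matrix (Fin 4) (Fin 4) ℂ) := by
  ext d e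
  fin_cases d <;> fin_cases e <;>
    simp [Matrix.mul_apply, W12, W13, W23, Fintype.sum_prod_type, Fin.sum_univ_four, symplEps] <;> norm_num

theorem W13_W23 : W13.transpose * W23 = (1 : ℂ) • (1 : Matrix (Fin 4) (Fin 4) ℂ) := by
  ext d e
  fin_cases d <;> fin_cases e <;>
    simp [Matrix.mul_apply, W12, W13, W23, Fintype.sum_prod_type, Fin.sum_univ_four, symplEps] <;> norm_num

theorem W23_W12 : W23.transpose * W12 = (-1 : ℂ) • (1 : Matrix (Fin 4) (Fin 4) ℂ) := by
  ext d e
  fin_cases d <;> fin_cases e <;>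
    simp [Matrix.mul_apply, W12, W13, W23, Fintype.sum_prod_type, Fin.sum_univ_four, symplEps] <;> norm_num

theorem W23_W13 : W23.transpose * W13 = (1 : ℂ) • (1 : Matrix (Fin 4) (Fin 4) ℂ) := by
  ext d e
  fin_cases d <;> fin_cases e <;>
    simp [Matrix.mul_apply, W12, W13, W23, Fintype.sum_prod_type, Fin.sum_univ_four, symplEps] <;> norm_num

theorem W23_W23 : W23.transpose * W23 = (4 : ℂ) • (1 : Matrix (Fin 4) (Fin 4) ℂ) := by
  ext d e
  fin_cases d <;> fin_cases e <;>
    simp [Matrix.mul_apply, W12, W13, W23, Fintype.sum_prod_type, Fin.sum_univ_four, symplEps] <;> norm_num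

theorem P12_P12 : P s12 * P s12 = 1 := by
  simp only [P_P, ← P_id]
  rfl

theorem P13_P13 : P s13 * P s13 = 1 := by
  simp only [P_P, ← P_id]
  rfl

theorem P23_P23 : P s23 * P s23 = 1 := by
  simp only [P_P, ← P_id]
  rfl

theorem P23_P12 : P s23 * P s12 = P s12 * P s13 := by
  simp only [P_P, ← P_id]
  rfl

theorem P13_P23 : P s13 * P s23 = P s12 * P s13 := by
  simp only [P_P, ← P_id]
  rfl

theorem P12_P23 : P s12 * P s23 = P s13 * P s12 := by
  simp only [P_P, ← P_id]
  rfl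

theorem P23_P13 : P s23 * P s13 = P s13 * P s12 := by
  simp only [P_P, ← P_id]
  rfl

theorem PPP12 : P s12 * (P s13 * P s12) = P s23 := by
  simp only [P_P]
  rfl

theorem PPP13 : P s13 * (P s12 * P s13) = P s23 := by
  simp only [P_P]
  rfl

theorem R12_eq (u : ℂ) : so5SpinR12 u = (2 * u * (2 * u + 3)) • (1 : Matrix T T ℂ)
    + (2 * u + 3) • P s12 - (2 * u) • (W12 * W12.transpose) := by
  ext ⟨a, b, c⟩ ⟨d, e, f⟩
  simp only [so5SpinR12, so5SpinR, P, s12, W12, Matrix.of_apply, Matrix.sub_apply, Matrix.add_apply,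
    Matrix.smul_apply, Matrix.one_apply, Matrix.mul_apply, Matrix.transpose_apply, Prod.mk.injEq,
    smul_eq_mul]
  by_cases h1 : a = d <;> by_cases h2 : b = e <;> by_cases h3 : c = f <;>
    simp [h1, h2, h3, eq_comm] <;> grind

theorem R13_eq (u : ℂ) : so5SpinR13 u = (2 * u * (2 * u + 3)) • (1 : Matrix T T ℂ)
    + (2 * u + 3) • P s13 - (2 * u) • (W13 * W13.transpose) := by
  ext ⟨a, b, c⟩ ⟨d, e, f⟩
  simp only [so5SpinR13, so5SpinR, P, s13, W13, Matrix.of_apply, Matrix.sub_apply, Matrix.add_apply,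
    Matrix.smul_apply, Matrix.one_apply, Matrix.mul_apply, Matrix.transpose_apply, Prod.mk.injEq,
    smul_eq_mul]
  by_cases h1 : a = d <;> by_cases h2 : b = e <;> by_cases h3 : c = f <;>
    simp [h1, h2, h3, eq_comm] <;> grind

theorem R23_eq (u : ℂ) : so5SpinR23 u = (2 * u * (2 * u + 3)) • (1 : Matrix T T ℂ)
    + (2 * u + 3) • P s23 - (2 * u) • (W23 * W23.transpose) := by
  ext ⟨a, b, c⟩ ⟨d, e, f⟩
  simp only [so5SpinR23, so5SpinR, P, s23, W23, Matrix.of_apply, Matrix.sub_apply, Matrix.add_apply,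
    Matrix.smul_apply, Matrix.one_apply, Matrix.mul_apply, Matrix.transpose_apply, Prod.mk.injEq,
    smul_eq_mul]
  by_cases h1 : a = d <;> by_cases h2 : b = e <;> by_cases h3 : c = f <;>
    simp [h1, h2, h3, eq_comm] <;> grind

end SpinYB

open SpinYB in
set_option maxHeartbeats 4000000 in
/-- The spinorial `so(5)` R-matrix satisfies the Yang–Baxter equation. -/
theorem so5SpinR_YangBaxter (u v : ℂ) :
    so5SpinR12 (u - v) * so5SpinR13 u * so5SpinR23 v =
      so5SpinR23 v * so5SpinR13 u * so5SpinR12 (u - v) := by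
  rw [R12_eq, R13_eq, R23_eq]
  simp only [Matrix.mul_add, Matrix.add_mul, Matrix.mul_sub, Matrix.sub_mul, Matrix.smul_mul,
    Matrix.mul_smul, Matrix.mul_one, Matrix.one_mul, Matrix.mul_assoc, Matrix.mul_neg, Matrix.neg_mul,
    
    P12_W12, lft P12_W12, W12_P12, lft W12_P12, P12_W13, lft P12_W13, 
    W13_P12, lft W13_P12, P12_W23, lft P12_W23, W23_P12, lft W23_P12, 
    P13_W12, lft P13_W12, W12_P13, lft W12_P13, P13_W13, lft P13_W13, 
    W13_P13, lft W13_P13, P13_W23, lft P13_W23, W23_P13, lft W23_P13, 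
    P23_W12, lft P23_W12, W12_P23, lft W12_P23, P23_W13, lft P23_W13, 
    W13_P23, lft W13_P23, P23_W23, lft P23_W23, W23_P23, lft W23_P23, 
    W12_W12, lft W12_W12, W12_W13, lft W12_W13, W12_W23, lft W12_W23, 
    W13_W12, lft W13_W12, W13_W13, lft W13_W13, W13_W23, lft W13_W23, 
    W23_W12, lft W23_W12, W23_W13, lft W23_W13, W23_W23, lft W23_W23, 
    P12_P12, lft P12_P12, P13_P13, lft P13_P13, P23_P23, lft P23_P23, 
    P23_P12, lft P23_P12, P13_P23, lft P13_P23, P12_P23, lft P12_P23, 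
    P23_P13, lft P23_P13, PPP12, PPP13]
  module
end

section
/- Let γ^1,…,γ^n be a Clifford family of M×M complex matrices, γ^{ab} := (1/2)(γ^aγ^b − γ^bγ^a), L^{ab}(u) := u·δ^{ab}·1_M − (1/2)·γ^{ab}, β := n/2 − 1, and let R^{a_1 a_2}_{b_1 b_2}(u) := u(u+β)δ^{a_1}_{b_1}δ^{a_2}_{b_2} + (u+β)δ^{a_1}_{b_2}δ^{a_2}_{b_1} − u·δ^{a_1 a_2}δ_{b_1 b_2}. For N ≥ 1 define the spinor monodromy entries T^{a_1…a_N}_{c_1…c_N}(u) := L^{a_1 c_1}(u)·L^{a_2 c_2}(u)⋯L^{a_N c_N}(u) and the reversed-order entries T̃^{c_1…c_N}_{b_1…b_N}(v) := L^{c_N b_N}(v)·L^{c_{N−1} b_{N−1}}(v)⋯L^{c_1 b_1}(v) (products of M×M matrices), and the vector monodromy entries 𝕋^{a_0, a_1…a_N}_{b_0, b_1…b_N}(u) := Σ_{d_1,…,d_{N−1}} R^{a_0 a_1}_{d_1 b_1}(u)·R^{d_1 a_2}_{d_2 b_2}(u)⋯R^{d_{N−1} a_N}_{b_0 b_N}(u)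 (complex scalars). Then for all complex u, all multi-indices a_1,…,a_N, b_1,…,b_N and all b_0 ∈ {1,…,n}: Σ_{c_1,…,c_N} T^{a_1…a_N}_{c_1…c_N}(u+β−1/2) · γ^{b_0} · T̃^{c_1…c_N}_{b_1…b_N}(−u−1/2) = (−1)^N · Σ_{a_0=1}^n 𝕋^{a_0, a_1…a_N}_{b_0, b_1…b_N}(u) · γ^{a_0}. -/
/-- The spinor L-operator `L^{ab}(u) = u·δ^{ab}·1 − (1/2)·γ^{ab}`,
`γ^{ab} = (1/2)(γ^aγ^b − γ^bγ^a)`. -/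
noncomputable def spinL {n M : ℕ} (γ : Fin n → Matrix (Fin M) (Fin M) ℂ)
    (u : ℂ) (a b : Fin n) : Matrix (Fin M) (Fin M) ℂ :=
  (u * (if a = b then (1 : ℂ) else 0)) • (1 : Matrix (Fin M) (Fin M) ℂ) -
    (1/2 : ℂ) • ((1/2 : ℂ) • (γ a * γ b - γ b * γ a))

/-- The fundamental orthogonal R-matrix entries with crossing parameter `β = n/2 − 1`. -/
noncomputable def vecR (n : ℕ) (u : ℂ) (a₁ a₂ b₁ b₂ : Fin n) : ℂ :=
  u * (u + ((n : ℂ) / 2 - 1)) *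
      (if a₁ = b₁ then (1 : ℂ) else 0) * (if a₂ = b₂ then (1 : ℂ) else 0) +
    (u + ((n : ℂ) / 2 - 1)) *
      (if a₁ = b₂ then (1 : ℂ) else 0) * (if a₂ = b₁ then (1 : ℂ) else 0) -
    u * (if a₁ = a₂ then (1 : ℂ) else 0) * (if b₁ = b₂ then (1 : ℂ) else 0)

/-- Spinor monodromy matrix entries `T^{a₁…a_N}_{c₁…c_N}(u) = L^{a₁c₁}(u)⋯L^{a_Nc_N}(u)`. -/
noncomputable def spinMonodromy {n M : ℕ} (γ : Fin n → Matrix (Fin M) (Fin M) ℂ) (N : ℕ)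
    (u : ℂ) (a c : Fin N → Fin n) : Matrix (Fin M) (Fin M) ℂ :=
  (List.ofFn fun i => spinL γ u (a i) (c i)).prod

/-- Reversed-order spinor monodromy matrix entries
`T̃^{c₁…c_N}_{b₁…b_N}(v) = L^{c_N b_N}(v)⋯L^{c₁ b₁}(v)`. -/
noncomputable def spinMonodromyRev {n M : ℕ} (γ : Fin n → Matrix (Fin M) (Fin M) ℂ) (N : ℕ)
    (v : ℂ) (c b : Fin N → Fin n) : Matrix (Fin M) (Fin M) ℂ :=
  (List.ofFn fun i => spinL γ v (c i) (b i)).reverse.prod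

/-- Vector monodromy matrix entries
`𝕋^{a₀,a₁…a_N}_{b₀,b₁…b_N}(u) = Σ_{d} R^{a₀a₁}_{d₁b₁}(u) R^{d₁a₂}_{d₂b₂}(u) ⋯
R^{d_{N−1}a_N}_{b₀b_N}(u)`, realized as the `(a₀,b₀)` entry of a product of `n×n`
matrices over the auxiliary vector space. -/
noncomputable def vecMonodromy (n N : ℕ) (u : ℂ) (a b : Fin N → Fin n)
    (a₀ b₀ : Fin n) : ℂ :=
  ((List.ofFn fun i => Matrix.of fun x y : Fin n => vecR n u x (a i) y (b i)).prod) a₀ b₀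

theorem spinL_eq {n M : ℕ} (γ : Fin n → Matrix (Fin M) (Fin M) ℂ)
    (hγ : ∀ a b, γ a * γ b + γ b * γ a =
      if a = b then (2 : ℂ) • (1 : Matrix (Fin M) (Fin M) ℂ) else 0)
    (u : ℂ) (a b : Fin n) :
    spinL γ u a b = ((u + 1/2) * (if a = b then (1 : ℂ) else 0)) •
      (1 : Matrix (Fin M) (Fin M) ℂ) - (1/2 : ℂ) • (γ a * γ b) := by
  have h := eq_sub_of_add_eq' (hγ a b)
  unfold spinL
  rw [h]
  split_ifs <;> module

theorem clifford_sum {n M : ℕ} (γ : Fin n → Matrix (Fin M) (Fin M) ℂ)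
    (hγ : ∀ a b, γ a * γ b + γ b * γ a =
      if a = b then (2 : ℂ) • (1 : Matrix (Fin M) (Fin M) ℂ) else 0) (d : Fin n) :
    ∑ c, γ c * γ d * γ c = (2 - (n : ℂ)) • γ d := by
  have hsq : ∀ c, γ c * γ c = 1 := by
    intro c
    have h := hγ c c
    rw [if_pos rfl, ← two_smul ℂ] at h
    exact smul_right_injective _ (two_ne_zero (α := ℂ)) h
  have h1 : ∀ c, γ c * γ d * γ c = (if c = d then (2 : ℂ) • γ d else 0) - γ d := by
    intro c
    rw [eq_sub_of_add_eq (hγ c d), sub_mul, mul_assoc (γ d), hsq, mul_one]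
    split_ifs with h
    · subst h; simp
    · simp
  simp only [h1, Finset.sum_sub_distrib, Finset.sum_ite_eq', Finset.mem_univ, if_true,
    Finset.sum_const, Finset.card_univ, Fintype.card_fin]
  rw [sub_smul, Nat.cast_smul_eq_nsmul]

theorem one_site {n M : ℕ} (γ : Fin n → Matrix (Fin M) (Fin M) ℂ)
    (hγ : ∀ a b, γ a * γ b + γ b * γ a =
      if a = b then (2 : ℂ) • (1 : Matrix (Fin M) (Fin M) ℂ) else 0)
    (u β : ℂ) (hβ : β = (n : ℂ) / 2 - 1) (a b d : Fin n) :
    ∑ c, spinL γ (u + β - 1/2) a c * γ d * spinL γ (-u - 1/2) c b =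
      (-1 : ℂ) • ∑ e, vecR n u e a d b • γ e := by
  have hn : (2 - (n : ℂ)) = -2 * β := by rw [hβ]; ring
  have hL : ∀ c, spinL γ (u + β - 1/2) a c * γ d * spinL γ (-u - 1/2) c b =
      (if a = c then (if c = b then (-(u * (u + β))) • γ d else 0) else 0)
      - (if a = c then ((u + β) / 2) • (γ d * γ c * γ b) else 0)
      + (if c = b then (u / 2) • (γ a * γ c * γ d) else 0)
      + (1/4 : ℂ) • (γ a * (γ c * γ d * γ c) * γ b) := by
    intro c
    rw [spinL_eq γ hγ, spinL_eq γ hγ]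
    split_ifs <;>
      simp only [sub_mul, mul_sub, smul_mul_assoc, mul_smul_comm, one_mul, mul_one, mul_assoc,
        mul_zero, zero_mul, zero_smul] <;> module
  have hR : ∀ e, vecR n u e a d b • γ e =
      (if e = d then (if a = b then (u * (u + β)) • γ d else 0) else 0)
      + (if e = b then (if a = d then (u + β) • γ b else 0) else 0)
      - (if e = a then (if d = b then u • γ a else 0) else 0) := by
    intro e
    unfold vecR
    rw [← hβ]
    have h1 : e = d → γ e = γ d := fun h => by rw [h]
    have h2 : e = b → γ e = γ b := fun h => by rw [h]
    have h3 : e = a → γ e = γ a := fun h => by rw [h]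
    simp only [sub_smul, add_smul]
    congr 1
    · congr 1
      · split_ifs with p q <;> simp [*]
      · split_ifs with p q <;> simp [add_smul, *]
    · split_ifs with p q <;> simp [*]
  simp only [hL, hR, Finset.sum_add_distrib, Finset.sum_sub_distrib, Finset.sum_ite_eq,
    Finset.sum_ite_eq', Finset.mem_univ, if_true, ← Finset.smul_sum, ← Finset.sum_mul,
    ← Finset.mul_sum]
  rw [clifford_sum γ hγ, hn]
  have e1 : γ d * γ a * γ b =
      (if a = d then (2 : ℂ) • γ b else 0) - γ a * γ d * γ b := by
    rw [eq_sub_of_add_eq' (hγ a d), sub_mul]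
    split_ifs <;> simp
  have e2 : γ a * γ b * γ d =
      (if d = b then (2 : ℂ) • γ a else 0) - γ a * γ d * γ b := by
    rw [mul_assoc, eq_sub_of_add_eq' (hγ d b), mul_sub, mul_assoc]
    split_ifs <;> simp
  rw [e1, e2]
  simp only [mul_smul_comm, smul_mul_assoc]
  split_ifs <;> module

theorem fusion_aux {n M : ℕ}
    (γ : Fin n → Matrix (Fin M) (Fin M) ℂ)
    (hγ : ∀ a b, γ a * γ b + γ b * γ a =
      if a = b then (2 : ℂ) • (1 : Matrix (Fin M) (Fin M) ℂ) else 0)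
    (β : ℂ) (hβ : β = (n : ℂ) / 2 - 1) (u : ℂ) (b₀ : Fin n) (N : ℕ) :
    ∀ (a b : Fin N → Fin n),
      ∑ c : Fin N → Fin n,
          spinMonodromy γ N (u + β - 1/2) a c * γ b₀ *
            spinMonodromyRev γ N (-u - 1/2) c b =
        (-1 : ℂ) ^ N • ∑ a₀ : Fin n, vecMonodromy n N u a b a₀ b₀ • γ a₀ := by
  induction N with
  | zero =>
    intro a b
    simp [spinMonodromy, spinMonodromyRev, vecMonodromy, Matrix.one_apply]
  | succ N ih =>
    intro a b
    have hV : ∀ e, vecMonodromy n (N+1) u a b e b₀ =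
        ∑ d, vecR n u e (a 0) d (b 0) *
          vecMonodromy n N u (fun i => a i.succ) (fun i => b i.succ) d b₀ := by
      intro e
      simp [vecMonodromy, List.ofFn_succ, Matrix.mul_apply]
    rw [← (Fin.consEquiv fun _ => Fin n).sum_comp, Fintype.sum_prod_type]
    have hS : ∀ x (y : Fin N → Fin n),
        spinMonodromy γ (N+1) (u + β - 1/2) a (Fin.consEquiv (fun _ => Fin n) (x, y)) * γ b₀ *
          spinMonodromyRev γ (N+1) (-u - 1/2) (Fin.consEquiv (fun _ => Fin n) (x, y)) b =
        spinL γ (u + β - 1/2) (a 0) x *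
          (spinMonodromy γ N (u + β - 1/2) (fun i => a i.succ) y * γ b₀ *
            spinMonodromyRev γ N (-u - 1/2) y (fun i => b i.succ)) *
          spinL γ (-u - 1/2) x (b 0) := by
      intro x y
      simp [spinMonodromy, spinMonodromyRev, List.ofFn_succ, Fin.consEquiv, mul_assoc]
    simp only [hS, ← Finset.mul_sum, ← Finset.sum_mul, ih]
    simp only [mul_smul_comm, smul_mul_assoc, Finset.mul_sum, Finset.sum_mul, ← Finset.smul_sum]
    rw [Finset.sum_comm]
    simp only [← Finset.smul_sum, one_site γ hγ u β hβ, hV]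
    rw [pow_succ, mul_smul]
    congr 1
    simp only [Finset.smul_sum, Finset.sum_smul, smul_smul]
    rw [Finset.sum_comm]
    refine Finset.sum_congr rfl fun e _ => ?_
    refine Finset.sum_congr rfl fun d _ => ?_
    congr 1
    ring

/-- Fusion relation between spinor and vector monodromy matrices:
`Σ_c T^{a}_{c}(u+β−1/2) · γ^{b₀} · T̃^{c}_{b}(−u−1/2)
  = (−1)^N · Σ_{a₀} 𝕋^{a₀,a}_{b₀,b}(u) · γ^{a₀}`. -/
theorem spinor_vector_monodromy_fusion {n M : ℕ}
    (γ : Fin n → Matrix (Fin M) (Fin M) ℂ)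
    (hγ : ∀ a b, γ a * γ b + γ b * γ a =
      if a = b then (2 : ℂ) • (1 : Matrix (Fin M) (Fin M) ℂ) else 0)
    (N : ℕ) (hN : 1 ≤ N) (β : ℂ) (hβ : β = (n : ℂ) / 2 - 1) :
    ∀ (u : ℂ) (a b : Fin N → Fin n) (b₀ : Fin n),
      ∑ c : Fin N → Fin n,
          spinMonodromy γ N (u + β - 1/2) a c * γ b₀ *
            spinMonodromyRev γ N (-u - 1/2) c b =
        (-1 : ℂ) ^ N • ∑ a₀ : Fin n, vecMonodromy n N u a b a₀ b₀ • γ a₀ := by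
  intro u a b b₀
  exact fusion_aux γ hγ β hβ u b₀ N a b
end
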